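/- Let n ≥ 1, 1 ≤ k ≤ n, and let U be an open subset of ℝⁿ that is star-shaped about one of its points. Every closed antisymmetric k-tensor field F on U has a divergence-free potential: there exists an antisymmetric (k−1)-tensor field A on U with F = dA on U and δA = 0 on U. (Strong Poincaré lemma: curl-free fields locally have divergence-free antiderivatives.) -/

import Mathlib

/-!
Write `d` for the exterior derivative, `δ` for the divergence and `Δ` for the componentwise
Laplacian. After a translation, `U` is star-shaped about the origin.

The classical Poincaré lemma gives an antisymmetric `A₀` with `F = dA₀` (`poincare_anti`). Suppose
that `H` is antisymmetric with `ΔH = A₀`, and put `A = δdH`. Then `δA = δδdH = 0` by antisymmetry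
of `dH` (`divg_divg`), and the flat Weitzenböck formula `δd + dδ = Δ` (`weitzenbock`) gives
`dA = d(ΔH - dδH) = dA₀ = F`. Antisymmetrizing reduces the choice of `H` to scalar equations.

What remains is the solvability of the scalar equation `Δu = f` on a star-shaped open set, for an
arbitrary smooth `f` without any growth condition (`poisson_star`). It is a Mittag-Leffler argument:
* `poisson_ball`: for compactly supported `f`, the Fourier transform solves the equation on any
  ball, once `f` has been modified far away so that its transform vanishes to second order at the
  origin. A cutoff then gives solutions near every compact subset of `U`.
* `runge`: near a star-shaped compact set `K`, a harmonic function is a uniform limit on `K` of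
  entire harmonic functions. Here `t ↦ u (t x)` is real analytic with a radius of convergence
  uniform over `x ∈ K`, and its Taylor coefficients at `t = 0` are entire harmonic functions of
  `x`; finitely many re-expansions lead from `t = 0` to `t = 1`.
* `harm_limit`: locally uniform limits of harmonic functions are harmonic.

The last two rest on the interior gradient estimate `grad_est`, proved by Bernstein's method from
the weak maximum principle.
-/

/-- Partial derivative of `f` at `x` in direction `v`. -/
noncomputable def pd {E F : Type*} [NormedAddCommGroup E] [NormedSpace ℝ E]
    [NormedAddCommGroup F] [NormedSpace ℝ F] (f : E → F) (v : E) (x : E) : F :=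
  fderiv ℝ f x v

/-- A `k`-tensor field is antisymmetric on `U` if permuting its indices multiplies it by
the sign of the permutation. -/
def IsAntisymmOn (n k : ℕ) (U : Set (EuclideanSpace ℝ (Fin n)))
    (F : EuclideanSpace ℝ (Fin n) → (Fin k → Fin n) → ℝ) : Prop :=
  ∀ x ∈ U, ∀ i : Fin k → Fin n, ∀ σ : Equiv.Perm (Fin k),
    F x (i ∘ σ) = ((Equiv.Perm.sign σ : ℤ) : ℝ) * F x i

/-- The exterior derivative of a `k`-tensor field, in coordinates:
`(dF)_{j₀…j_k} = Σ_m (−1)^m ∂_{j_m} F_{j₀…ĵ_m…j_k}`. -/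
noncomputable def extDer (n k : ℕ)
    (F : EuclideanSpace ℝ (Fin n) → (Fin k → Fin n) → ℝ) :
    EuclideanSpace ℝ (Fin n) → (Fin (k + 1) → Fin n) → ℝ :=
  fun x j => ∑ m : Fin (k + 1),
    (-1 : ℝ) ^ (m : ℕ) * pd (fun y => F y (j ∘ m.succAbove)) (EuclideanSpace.single (j m) 1) x

/-- The divergence of a `(k+1)`-tensor field, in coordinates:
`(δF)_{i₂…i_k} = Σ_j ∂_j F_{j i₂…i_k}`. -/
noncomputable def divg (n k : ℕ)
    (F : EuclideanSpace ℝ (Fin n) → (Fin (k + 1) → Fin n) → ℝ) :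
    EuclideanSpace ℝ (Fin n) → (Fin k → Fin n) → ℝ :=
  fun x i => ∑ j : Fin n, pd (fun y => F y (Fin.cons j i)) (EuclideanSpace.single j 1) x

/-- A `g`-tensor field is divergence-free on `U` if `δF = 0` there; for `g = 0` the
divergence vanishes by convention. -/
def DivFreeOn (n : ℕ) (U : Set (EuclideanSpace ℝ (Fin n))) :
    (g : ℕ) → (EuclideanSpace ℝ (Fin n) → (Fin g → Fin n) → ℝ) → Prop
  | 0, _ => True
  | (p + 1), G => ∀ x ∈ U, ∀ i : Fin p → Fin n, divg n p G x i = 0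

open Set Filter Topology Metric

/-! ### Directional derivatives and the Laplacian -/

/-- The Euclidean space `ℝⁿ`. -/
abbrev Sp (n : ℕ) := EuclideanSpace ℝ (Fin n)

/-- The `i`-th standard basis vector of `ℝⁿ`. -/
noncomputable abbrev ee {n : ℕ} (i : Fin n) : Sp n := EuclideanSpace.single i 1

section basics
variable {n : ℕ} {V : Set (Sp n)} {f g : Sp n → ℝ} {x : Sp n}

lemma ContDiffOn.diffAt (hf : ContDiffOn ℝ (⊤ : ℕ∞) f V) (hV : IsOpen V) (hx : x ∈ V) :
    DifferentiableAt ℝ f x :=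
  (hf.contDiffAt (hV.mem_nhds hx)).differentiableAt (by simp)

lemma pd_smooth (hV : IsOpen V) (hf : ContDiffOn ℝ (⊤ : ℕ∞) f V) (v : Sp n) :
    ContDiffOn ℝ (⊤ : ℕ∞) (pd f v) V :=
  (hf.fderiv_of_isOpen hV (m := (⊤ : ℕ∞)) (by simp)).clm_apply contDiffOn_const

lemma pd_congr (hV : IsOpen V) (h : ∀ y ∈ V, f y = g y) (v : Sp n) (hx : x ∈ V) :
    pd f v x = pd g v x := by
  have : f =ᶠ[𝓝 x] g := by
    filter_upwards [hV.mem_nhds hx] with y hy using h y hy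
  simp only [pd, this.fderiv_eq]

lemma pd_add (hf : DifferentiableAt ℝ f x) (hg : DifferentiableAt ℝ g x) (v : Sp n) :
    pd (fun y => f y + g y) v x = pd f v x + pd g v x := by
  simp only [pd]; rw [fderiv_fun_add hf hg]; rfl

lemma pd_sub (hf : DifferentiableAt ℝ f x) (hg : DifferentiableAt ℝ g x) (v : Sp n) :
    pd (fun y => f y - g y) v x = pd f v x - pd g v x := by
  simp only [pd]; rw [fderiv_fun_sub hf hg]; rfl

lemma pd_const_mul (c : ℝ) (hf : DifferentiableAt ℝ f x) (v : Sp n) :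
    pd (fun y => c * f y) v x = c * pd f v x := by
  simp only [pd]; rw [fderiv_const_mul hf]; rfl

lemma pd_mul (hf : DifferentiableAt ℝ f x) (hg : DifferentiableAt ℝ g x) (v : Sp n) :
    pd (fun y => f y * g y) v x = f x * pd g v x + g x * pd f v x := by
  simp only [pd]; rw [fderiv_fun_mul hf hg]; rfl

lemma pd_const (c : ℝ) (v : Sp n) : pd (fun _ : Sp n => c) v x = 0 := by
  simp [pd]

lemma pd_sum {ι : Type*} (s : Finset ι) {f : ι → Sp n → ℝ}
    (hf : ∀ i ∈ s, DifferentiableAt ℝ (f i) x) (v : Sp n) :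
    pd (fun y => ∑ i ∈ s, f i y) v x = ∑ i ∈ s, pd (f i) v x := by
  simp only [pd]; rw [fderiv_fun_sum hf]; simp

lemma pd_coord (i : Fin n) (v : Sp n) : pd (fun y : Sp n => y i) v x = v i := by
  change fderiv ℝ (EuclideanSpace.proj i : Sp n →L[ℝ] ℝ) x v = v i
  rw [ContinuousLinearMap.fderiv]; rfl

lemma pd_comm (hV : IsOpen V) (hf : ContDiffOn ℝ (⊤ : ℕ∞) f V) (hx : x ∈ V) (v w : Sp n) :
    pd (pd f v) w x = pd (pd f w) v x := by
  have h1 : ContDiffAt ℝ (⊤ : ℕ∞) f x := hf.contDiffAt (hV.mem_nhds hx)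
  have h2 : DifferentiableAt ℝ (fderiv ℝ f) x :=
    ((h1.fderiv_right (m := (⊤ : ℕ∞)) (by simp)).differentiableAt (by simp))
  have key : ∀ v w : Sp n, pd (pd f v) w x = fderiv ℝ (fderiv ℝ f) x w v := by
    intro v w
    have : pd f v = fun y => (fderiv ℝ f y) v := rfl
    rw [this]; simp only [pd]
    rw [fderiv_clm_apply h2 (differentiableAt_const v)]
    simp
  rw [key, key]
  exact (h1.isSymmSndFDerivAt (by
    simp only [minSmoothness_of_isRCLikeNormedField]
    exact WithTop.coe_le_coe.2 (le_top : (2 : ℕ∞) ≤ ⊤))).eq w v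

lemma fderiv_eq_sum (f : Sp n → ℝ) (x v : Sp n) : pd f v x = ∑ i, v i * pd f (ee i) x := by
  have : v = ∑ i, v i • (ee i : Sp n) := by
    ext j; simp [ee, Finset.sum_apply, Pi.single_apply]
  calc pd f v x = fderiv ℝ f x (∑ i, v i • (ee i : Sp n)) := by rw [← this]; rfl
    _ = _ := by simp only [map_sum, map_smul, smul_eq_mul, pd]

/-- The Laplacian `Σ_i ∂_i ∂_i f` of a real function on `ℝⁿ`. -/
noncomputable def lap (f : Sp n → ℝ) (x : Sp n) : ℝ := ∑ i, pd (pd f (ee i)) (ee i) x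

/-- `u` is smooth and harmonic on `V`. -/
def Harm (u : Sp n → ℝ) (V : Set (Sp n)) : Prop :=
  ContDiffOn ℝ (⊤ : ℕ∞) u V ∧ ∀ x ∈ V, lap u x = 0

lemma lap_congr (hV : IsOpen V) (h : ∀ y ∈ V, f y = g y) (hx : x ∈ V) : lap f x = lap g x :=
  Finset.sum_congr rfl fun i _ => pd_congr hV (fun _ hy => pd_congr hV h (ee i) hy) _ hx

lemma lap_add (hV : IsOpen V) (hf : ContDiffOn ℝ (⊤ : ℕ∞) f V) (hg : ContDiffOn ℝ (⊤ : ℕ∞) g V)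
    (hx : x ∈ V) : lap (fun y => f y + g y) x = lap f x + lap g x := by
  simp only [lap, ← Finset.sum_add_distrib]
  refine Finset.sum_congr rfl fun i _ => ?_
  rw [← pd_add ((pd_smooth hV hf _).diffAt hV hx) ((pd_smooth hV hg _).diffAt hV hx)]
  exact pd_congr hV (fun y hy => pd_add (hf.diffAt hV hy) (hg.diffAt hV hy) _) _ hx

lemma lap_const_mul (c : ℝ) (hV : IsOpen V) (hf : ContDiffOn ℝ (⊤ : ℕ∞) f V)
    (hx : x ∈ V) : lap (fun y => c * f y) x = c * lap f x := by
  simp only [lap, Finset.mul_sum]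
  refine Finset.sum_congr rfl fun i _ => ?_
  rw [← pd_const_mul c ((pd_smooth hV hf _).diffAt hV hx)]
  exact pd_congr hV (fun y hy => pd_const_mul c (hf.diffAt hV hy) _) _ hx

lemma lap_sum {ι : Type*} (s : Finset ι) {f : ι → Sp n → ℝ} (hV : IsOpen V)
    (hf : ∀ i ∈ s, ContDiffOn ℝ (⊤ : ℕ∞) (f i) V) (hx : x ∈ V) :
    lap (fun y => ∑ i ∈ s, f i y) x = ∑ i ∈ s, lap (f i) x := by
  simp only [lap]
  rw [Finset.sum_comm]
  refine Finset.sum_congr rfl fun i _ => ?_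
  rw [← pd_sum s (fun j hj => (pd_smooth hV (hf j hj) _).diffAt hV hx)]
  exact pd_congr hV (fun y hy => pd_sum s (fun j hj => (hf j hj).diffAt hV hy) _) _ hx

lemma pd_lap (hV : IsOpen V) (hf : ContDiffOn ℝ (⊤ : ℕ∞) f V) (hx : x ∈ V) (v : Sp n) :
    lap (pd f v) x = pd (lap f) v x := by
  unfold lap
  rw [pd_sum _ (fun i _ => (pd_smooth hV (pd_smooth hV hf _) _).diffAt hV hx)]
  refine Finset.sum_congr rfl fun i _ => ?_
  rw [← pd_comm hV (pd_smooth hV hf (ee i)) hx v (ee i)]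
  exact pd_congr hV (fun y hy => pd_comm hV hf hy v (ee i)) _ hx

lemma Harm.mono {W : Set (Sp n)} (h : Harm f V) (hW : W ⊆ V) : Harm f W :=
  ⟨h.1.mono hW, fun x hx => h.2 x (hW hx)⟩

lemma Harm.pd (hV : IsOpen V) (h : Harm f V) (v : Sp n) : Harm (pd f v) V := by
  refine ⟨pd_smooth hV h.1 v, fun x hx => ?_⟩
  rw [pd_lap hV h.1 hx, pd_congr hV (g := fun _ => 0) h.2 v hx, pd_const]

lemma Harm.add (hV : IsOpen V) (hf : Harm f V) (hg : Harm g V) :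
    Harm (fun y => f y + g y) V :=
  ⟨hf.1.add hg.1, fun x hx => by rw [lap_add hV hf.1 hg.1 hx, hf.2 x hx, hg.2 x hx, add_zero]⟩

lemma Harm.const_mul (c : ℝ) (hV : IsOpen V) (hf : Harm f V) : Harm (fun y => c * f y) V :=
  ⟨contDiffOn_const.mul hf.1, fun x hx => by
    rw [lap_const_mul c hV hf.1 hx, hf.2 x hx, mul_zero]⟩

lemma Harm.sub (hV : IsOpen V) (hf : Harm f V) (hg : Harm g V) :
    Harm (fun y => f y - g y) V := by
  simpa [sub_eq_add_neg] using hf.add hV (hg.const_mul (-1) hV)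

lemma Harm.sum {ι : Type*} (s : Finset ι) {f : ι → Sp n → ℝ} (hV : IsOpen V)
    (hf : ∀ i ∈ s, Harm (f i) V) : Harm (fun y => ∑ i ∈ s, f i y) V :=
  ⟨ContDiffOn.sum fun i hi => (hf i hi).1, fun x hx => by
    rw [lap_sum s hV (fun i hi => (hf i hi).1) hx]
    exact Finset.sum_eq_zero fun i hi => (hf i hi).2 x hx⟩

lemma harm_const (c : ℝ) : Harm (fun _ : Sp n => c) V :=
  ⟨contDiffOn_const, fun x _ => by
    have : _root_.pd (fun _ : Sp n => c) = fun _ _ => 0 := by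
      funext v y; exact pd_const c v
    simp [lap, this, pd_const]⟩

/-- Dilating the argument: `x ↦ u (s x)`. -/
lemma Harm.dilate (s : ℝ) {W : Set (Sp n)} (hV : IsOpen V) (hW : IsOpen W) (hf : Harm f V)
    (h : ∀ x ∈ W, s • x ∈ V) : Harm (fun y => f (s • y)) W := by
  have hd : ∀ g : Sp n → ℝ, ContDiffOn ℝ (⊤ : ℕ∞) g V → ∀ v, ∀ x ∈ W,
      _root_.pd (fun y => g (s • y)) v x = s * _root_.pd g v (s • x) := by
    intro g hg v x hx
    have h1 : HasFDerivAt (fun y : Sp n => s • y) (s • ContinuousLinearMap.id ℝ (Sp n)) x :=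
      (hasFDerivAt_id x).const_smul s
    have h2 := ((hg.diffAt hV (h x hx)).hasFDerivAt).comp x h1
    have h3 : fderiv ℝ (fun y => g (s • y)) x = _ := h2.fderiv
    simp only [_root_.pd]; rw [h3]; simp
  have hsm : ContDiffOn ℝ (⊤ : ℕ∞) (fun y => f (s • y)) W :=
    hf.1.comp (contDiff_const_smul s).contDiffOn h
  refine ⟨hsm, fun x hx => ?_⟩
  have : lap (fun y => f (s • y)) x = s * (s * lap f (s • x)) := by
    simp only [lap, Finset.mul_sum]
    refine Finset.sum_congr rfl fun i _ => ?_
    have hs2 : ContDiffOn ℝ (⊤ : ℕ∞) (fun y => _root_.pd f (ee i) (s • y)) W :=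
      (pd_smooth hV hf.1 _).comp (contDiff_const_smul s).contDiffOn h
    rw [pd_congr hW (fun y hy => hd f hf.1 (ee i) y hy) _ hx,
      pd_const_mul s (hs2.diffAt hW hx), hd _ (pd_smooth hV hf.1 _) _ x hx]
  rw [this, hf.2 _ (h x hx)]; simp

end basics

/-! ### Maximum principle and gradient estimate -/

section estimates
variable {n : ℕ} {V : Set (Sp n)} {f g w u : Sp n → ℝ} {x a : Sp n} {r M : ℝ}

lemma hasDerivAt_line (hV : IsOpen V) (hw : ContDiffOn ℝ (⊤ : ℕ∞) w V) (v : Sp n) (t : ℝ)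
    (hx : x + t • v ∈ V) : HasDerivAt (fun t : ℝ => w (x + t • v)) (pd w v (x + t • v)) t := by
  have h1 : HasDerivAt (fun t : ℝ => x + t • v) v t := by
    simpa using ((hasDerivAt_id t).smul_const v).const_add x
  exact ((hw.diffAt hV hx).hasFDerivAt).comp_hasDerivAt t h1

/-- The second derivative test: at a local maximum the pure second derivatives are `≤ 0`. -/
lemma pd_pd_nonpos (hV : IsOpen V) (hw : ContDiffOn ℝ (⊤ : ℕ∞) w V) (hx : x ∈ V)
    (hmax : IsLocalMax w x) (v : Sp n) : pd (pd w v) v x ≤ 0 := by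
  by_contra! hpos
  set G : ℝ → ℝ := fun t => w (x + t • v) with hG
  have hcont : Continuous fun t : ℝ => x + t • v := by fun_prop
  have hev : ∀ᶠ t in 𝓝 (0 : ℝ), x + t • v ∈ V :=
    hcont.continuousAt.eventually (by simpa using hV.mem_nhds hx)
  have hd1 : deriv G =ᶠ[𝓝 0] fun t => pd w v (x + t • v) := by
    filter_upwards [hev] with t ht using (hasDerivAt_line hV hw v t ht).deriv
  have hx0 : x + (0 : ℝ) • v ∈ V := by simpa using hx
  have hd2 : deriv (deriv G) 0 = pd (pd w v) v x := by
    rw [hd1.deriv_eq, (hasDerivAt_line hV (pd_smooth hV hw v) v 0 hx0).deriv]; simp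
  have hmaxG : IsLocalMax G 0 := by
    have : Tendsto (fun t : ℝ => x + t • v) (𝓝 0) (𝓝 x) := by
      simpa using hcont.tendsto 0
    have h := this.eventually hmax
    simpa [IsLocalMax, IsMaxFilter, hG] using h
  have hmin : IsLocalMin G 0 := isLocalMin_of_deriv_deriv_pos (by rw [hd2]; exact hpos)
    hmaxG.deriv_eq_zero (hasDerivAt_line hV hw v 0 hx0).continuousAt
  have hconst : G =ᶠ[𝓝 0] fun _ => G 0 := by
    filter_upwards [hmaxG, hmin] with t h1 h2 using le_antisymm h1 h2
  have h0 : deriv (deriv G) 0 = 0 := by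
    have h3 : deriv G =ᶠ[𝓝 0] fun _ => 0 := by
      have := hconst.deriv
      simpa using this
    rw [h3.deriv_eq]; simp
  rw [hd2] at h0; exact hpos.ne' h0

lemma smooth_sq (a : Sp n) : ContDiff ℝ (⊤ : ℕ∞) (fun y : Sp n => ‖y - a‖ ^ 2) :=
  (contDiff_id.sub contDiff_const).norm_sq ℝ

lemma pd_sq (a v : Sp n) (x : Sp n) :
    pd (fun y : Sp n => ‖y - a‖ ^ 2) v x = 2 * inner ℝ (x - a) v := by
  have h : HasFDerivAt (fun y : Sp n => y - a) (ContinuousLinearMap.id ℝ (Sp n)) x :=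
    (hasFDerivAt_id x).sub_const a
  have h3 := h.norm_sq.fderiv
  simp only [pd]; rw [h3]; simp [inner_sub_left]

lemma pd_sq_ee (a : Sp n) (i : Fin n) (x : Sp n) :
    pd (fun y : Sp n => ‖y - a‖ ^ 2) (ee i) x = 2 * (x i - a i) := by
  rw [pd_sq]; simp [ee, EuclideanSpace.inner_single_right]

lemma pd_pd_sq (a : Sp n) (i : Fin n) (x : Sp n) :
    pd (pd (fun y : Sp n => ‖y - a‖ ^ 2) (ee i)) (ee i) x = 2 := by
  have : pd (fun y : Sp n => ‖y - a‖ ^ 2) (ee i) = fun y => 2 * (y i - a i) :=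
    funext fun y => pd_sq_ee a i y
  rw [this]
  have hp : DifferentiableAt ℝ (fun y : Sp n => y i) x := by fun_prop
  rw [pd_const_mul 2 (hp.sub_const _), pd_sub hp (by fun_prop), pd_const, pd_coord]
  simp [ee]

/-- The weak maximum principle on a ball: a subharmonic function is bounded at the centre by its
boundary values. -/
lemma max_principle (hn : 0 < n) (hr : 0 < r) (hV : IsOpen V) (hsub : closedBall a r ⊆ V)
    (hw : ContDiffOn ℝ (⊤ : ℕ∞) w V) (hlap : ∀ x ∈ ball a r, 0 ≤ lap w x) {B : ℝ}
    (hB : ∀ x ∈ sphere a r, w x ≤ B) : w a ≤ B := by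
  -- the perturbation `ε ‖x - a‖²` makes the Laplacian strictly positive
  have key : ∀ ε > 0, w a ≤ B + ε * r ^ 2 := by
    intro ε hε
    set W : Sp n → ℝ := fun y => w y + ε * ‖y - a‖ ^ 2 with hWdef
    have hs : ContDiffOn ℝ (⊤ : ℕ∞) (fun y : Sp n => ε * ‖y - a‖ ^ 2) V :=
      contDiffOn_const.mul (smooth_sq a).contDiffOn
    have hW : ContDiffOn ℝ (⊤ : ℕ∞) W V := hw.add hs
    obtain ⟨x0, hx0, hmax⟩ := (isCompact_closedBall a r).exists_isMaxOn
      ⟨a, mem_closedBall_self hr.le⟩ (hW.continuousOn.mono hsub)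
    have ha : w a ≤ W x0 := by
      have := hmax (mem_closedBall_self hr.le : a ∈ closedBall a r)
      simpa [hWdef] using this
    by_cases hin : x0 ∈ ball a r
    · exfalso
      have hloc : IsLocalMax W x0 := by
        filter_upwards [isOpen_ball.mem_nhds hin] with y hy using hmax (ball_subset_closedBall hy)
      have h1 : lap W x0 ≤ 0 :=
        Finset.sum_nonpos fun i _ => pd_pd_nonpos hV hW (hsub hx0) hloc _
      have h2 : lap (fun y : Sp n => ε * ‖y - a‖ ^ 2) x0 = ε * (2 * n) := by
        rw [lap_const_mul ε isOpen_univ (smooth_sq a).contDiffOn (mem_univ _)]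
        simp [lap, pd_pd_sq, mul_comm]
      rw [hWdef, lap_add hV hw hs (hsub hx0), h2] at h1
      have := hlap x0 hin
      have : 0 < ε * (2 * (n : ℝ)) := by positivity
      linarith
    · have hsp : x0 ∈ sphere a r := by
        simp only [mem_ball, not_lt, mem_closedBall, mem_sphere] at *
        exact le_antisymm hx0 hin
      have h1 := hB x0 hsp
      have h2 : ‖x0 - a‖ = r := by simpa [dist_eq_norm] using hsp
      have : W x0 = w x0 + ε * r ^ 2 := by simp only [hWdef]; rw [h2]
      linarith
  by_contra! h
  have := key ((w a - B) / (2 * r ^ 2)) (by have := sub_pos.2 h; positivity)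
  have h2 : (w a - B) / (2 * r ^ 2) * r ^ 2 = (w a - B) / 2 := by field_simp
  rw [h2] at this
  linarith

/-- Bernstein's method: the auxiliary function `η² (∂_j u)² + λ u²` with `η = r² - ‖x - a‖²` is
subharmonic for `λ = (12 + 2n) r²`, which bounds `∂_j u` at the centre of the ball. -/
lemma grad_est_coord (hn : 0 < n) (hr : 0 < r) (hV : IsOpen V) (hsub : closedBall a r ⊆ V)
    (hu : Harm u V) (hM : ∀ x ∈ closedBall a r, |u x| ≤ M) (j : Fin n) :
    |pd u (ee j) a| ≤ (12 + 2 * n) * (M / r) := by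
  set v := pd u (ee j) with hv
  have hvH : Harm v V := hu.pd hV _
  set η : Sp n → ℝ := fun y => r ^ 2 - ‖y - a‖ ^ 2 with hη
  have hηs : ContDiffOn ℝ (⊤ : ℕ∞) η V := contDiffOn_const.sub (smooth_sq a).contDiffOn
  set c : ℝ := (12 + 2 * n) * r ^ 2 with hc
  set w : Sp n → ℝ := fun y => (η y * η y) * (v y * v y) + c * (u y * u y) with hwdef
  have hpη : ∀ y ∈ V, ∀ i, pd η (ee i) y = -2 * (y i - a i) := by
    intro y hy i
    rw [hη, pd_sub (by fun_prop) ((smooth_sq a).differentiable (by simp) y), pd_const, pd_sq_ee]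
    ring
  have hw : ContDiffOn ℝ (⊤ : ℕ∞) w V :=
    ((hηs.mul hηs).mul (hvH.1.mul hvH.1)).add (contDiffOn_const.mul (hu.1.mul hu.1))
  -- second derivative of a square
  have hsq : ∀ g : Sp n → ℝ, ContDiffOn ℝ (⊤ : ℕ∞) g V → ∀ i, ∀ y ∈ V,
      pd (fun z => g z * g z) (ee i) y = 2 * (g y * pd g (ee i) y) := by
    intro g hg i y hy
    rw [pd_mul (hg.diffAt hV hy) (hg.diffAt hV hy)]; ring
  have hsq2 : ∀ g : Sp n → ℝ, ContDiffOn ℝ (⊤ : ℕ∞) g V → ∀ i, ∀ y ∈ V,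
      pd (pd (fun z => g z * g z) (ee i)) (ee i) y
        = 2 * (g y * pd (pd g (ee i)) (ee i) y + pd g (ee i) y ^ 2) := by
    intro g hg i y hy
    rw [pd_congr hV (hsq g hg i) _ hy, pd_const_mul 2 ((hg.mul (pd_smooth hV hg _)).diffAt hV hy),
      pd_mul (hg.diffAt hV hy) ((pd_smooth hV hg _).diffAt hV hy)]
    ring
  have hprod : ∀ p q : Sp n → ℝ, ContDiffOn ℝ (⊤ : ℕ∞) p V → ContDiffOn ℝ (⊤ : ℕ∞) q V →
      ∀ i, ∀ y ∈ V, pd (pd (fun z => p z * q z) (ee i)) (ee i) y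
        = p y * pd (pd q (ee i)) (ee i) y + q y * pd (pd p (ee i)) (ee i) y
          + 2 * (pd p (ee i) y * pd q (ee i) y) := by
    intro p q hp hq i y hy
    have hp' := pd_smooth hV hp (ee i)
    have hq' := pd_smooth hV hq (ee i)
    rw [pd_congr hV (fun z hz => pd_mul (hp.diffAt hV hz) (hq.diffAt hV hz) (ee i)) _ hy,
      pd_add ((hp.mul hq').diffAt hV hy) ((hq.mul hp').diffAt hV hy),
      pd_mul (hp.diffAt hV hy) (hq'.diffAt hV hy), pd_mul (hq.diffAt hV hy) (hp'.diffAt hV hy)]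
    ring
  have hη2 : ∀ y ∈ V, ∀ i, pd (pd η (ee i)) (ee i) y = -2 := by
    intro y hy i
    have hd : DifferentiableAt ℝ (fun y : Sp n => y i) y := by fun_prop
    rw [pd_congr hV (fun z hz => hpη z hz i) _ hy, pd_const_mul _ (hd.sub_const _),
      pd_sub hd (by fun_prop), pd_const, pd_coord]
    simp [ee]
  have hlap : ∀ x ∈ ball a r, 0 ≤ lap w x := by
    intro x hx
    have hxV : x ∈ V := hsub (ball_subset_closedBall hx)
    have hηx : 0 ≤ η x ∧ η x ≤ r ^ 2 := by
      have h1 : ‖x - a‖ ≤ r := by simpa [dist_eq_norm] using (mem_ball.1 hx).le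
      have h2 : ‖x - a‖ ^ 2 ≤ r ^ 2 := by gcongr
      exact ⟨by simp only [hη]; linarith, by simp only [hη]; nlinarith [sq_nonneg ‖x - a‖]⟩
    have e1 : ∀ i, pd (pd w (ee i)) (ee i) x =
        2 * (η x * pd v (ee i) x + 2 * pd η (ee i) x * v x) ^ 2
        - 6 * (pd η (ee i) x) ^ 2 * v x ^ 2 - 4 * η x * v x ^ 2
        + 2 * η x ^ 2 * v x * pd (pd v (ee i)) (ee i) x
        + 2 * c * pd u (ee i) x ^ 2 + 2 * c * u x * pd (pd u (ee i)) (ee i) x := by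
      intro i
      have s1 := (hηs.mul hηs).mul (hvH.1.mul hvH.1)
      have s2 := hu.1.mul hu.1
      have s3 : ContDiffOn ℝ (⊤ : ℕ∞) (fun y => c * (u y * u y)) V := contDiffOn_const.mul s2
      rw [hwdef, pd_congr hV (fun y hy => pd_add (s1.diffAt hV hy) (s3.diffAt hV hy) _) _ hxV,
        pd_add ((pd_smooth hV s1 _).diffAt hV hxV) ((pd_smooth hV s3 _).diffAt hV hxV),
        hprod _ _ (hηs.mul hηs) (hvH.1.mul hvH.1) i x hxV,
        pd_congr hV (fun y hy => pd_const_mul c (s2.diffAt hV hy) _) _ hxV,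
        pd_const_mul c ((pd_smooth hV s2 _).diffAt hV hxV), hsq2 u hu.1 i x hxV,
        hsq2 η hηs i x hxV, hsq2 v hvH.1 i x hxV, hsq η hηs i x hxV, hsq v hvH.1 i x hxV,
        hη2 x hxV i]
      ring
    have e2 : ∀ i, -24 * (x i - a i) ^ 2 * v x ^ 2 - 4 * η x * v x ^ 2
        + 2 * η x ^ 2 * v x * pd (pd v (ee i)) (ee i) x
        + 2 * c * pd u (ee i) x ^ 2 + 2 * c * u x * pd (pd u (ee i)) (ee i) x
        ≤ pd (pd w (ee i)) (ee i) x := by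
      intro i
      rw [e1 i, hpη x hxV i]
      nlinarith [sq_nonneg (η x * pd v (ee i) x + 2 * (-2 * (x i - a i)) * v x)]
    have e3 : -24 * ‖x - a‖ ^ 2 * v x ^ 2 - 4 * n * η x * v x ^ 2
        + 2 * c * ∑ i, pd u (ee i) x ^ 2 ≤ lap w x := by
      have h1 := Finset.sum_le_sum fun i (_ : i ∈ Finset.univ) => e2 i
      have h2 : ∑ i, pd (pd v (ee i)) (ee i) x = 0 := hvH.2 x hxV
      have h3 : ∑ i, pd (pd u (ee i)) (ee i) x = 0 := hu.2 x hxV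
      have h4 : ‖x - a‖ ^ 2 = ∑ i, (x i - a i) ^ 2 := by
        rw [EuclideanSpace.norm_sq_eq]; simp
      simp only [Finset.sum_add_distrib, Finset.sum_sub_distrib, ← Finset.mul_sum,
        ← Finset.sum_mul, h2, h3, ← h4] at h1
      simp only [Finset.sum_const, Finset.card_univ, Fintype.card_fin, nsmul_eq_mul] at h1
      unfold lap
      linarith
    have e4 : v x ^ 2 ≤ ∑ i, pd u (ee i) x ^ 2 :=
      Finset.single_le_sum (f := fun i => pd u (ee i) x ^ 2) (fun i _ => sq_nonneg _)
        (Finset.mem_univ j)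
    have hcpos : 0 ≤ c := by positivity
    have e5 : ‖x - a‖ ^ 2 = r ^ 2 - η x := by simp only [hη]; ring
    have e6 : (24 * ‖x - a‖ ^ 2 + 4 * n * η x) * v x ^ 2 ≤ 2 * c * v x ^ 2 := by
      gcongr
      have : 4 * (n : ℝ) * η x ≤ 4 * n * r ^ 2 := by gcongr; exact hηx.2
      rw [e5, hc]; nlinarith [hηx.1]
    nlinarith [mul_le_mul_of_nonneg_left e4 hcpos]
  have hM0 : 0 ≤ M := (abs_nonneg _).trans (hM a (mem_closedBall_self hr.le))
  have hend := max_principle (B := c * M ^ 2) hn hr hV hsub hw hlap (by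
    intro x hx
    have h2 : ‖x - a‖ = r := by simpa [dist_eq_norm] using hx
    have h3 : η x = 0 := by simp only [hη]; rw [h2]; ring
    have h4 : u x * u x ≤ M ^ 2 := by
      have := hM x (sphere_subset_closedBall hx)
      rw [← sq, ← sq_abs]; gcongr
    simp only [hwdef, h3, zero_mul, zero_add]
    gcongr)
  have h5 : η a = r ^ 2 := by simp [hη]
  have h6 : (r ^ 2) ^ 2 * v a ^ 2 ≤ c * M ^ 2 := by
    simp only [hwdef, h5] at hend
    have : 0 ≤ c * (u a * u a) := mul_nonneg (by positivity) (mul_self_nonneg _)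
    nlinarith
  have h7 : v a ^ 2 ≤ ((12 + 2 * n) * (M / r)) ^ 2 := by
    have h8 : r ^ 2 * v a ^ 2 ≤ (12 + 2 * n) * M ^ 2 := by
      have hr2 : 0 < r ^ 2 := by positivity
      refine le_of_mul_le_mul_left ?_ hr2
      rw [hc] at h6; linarith
    have h9 : v a ^ 2 ≤ (12 + 2 * n) * M ^ 2 / r ^ 2 := by
      rw [le_div_iff₀ (by positivity)]; linarith
    refine h9.trans ?_
    rw [mul_pow, div_pow, mul_div_assoc]
    gcongr
    have : (0 : ℝ) ≤ n := Nat.cast_nonneg n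
    nlinarith
  exact abs_le_of_sq_le_sq h7 (by positivity)

/-- Interior gradient estimate for harmonic functions. -/
lemma grad_est (hn : 0 < n) (hr : 0 < r) (hV : IsOpen V) (hsub : closedBall a r ⊆ V)
    (hu : Harm u V) (hM : ∀ x ∈ closedBall a r, |u x| ≤ M) (v : Sp n) :
    |pd u v a| ≤ n * (12 + 2 * n) * ‖v‖ / r * M := by
  rw [fderiv_eq_sum]
  calc |∑ i, v i * pd u (ee i) a| ≤ ∑ i, |v i * pd u (ee i) a| := Finset.abs_sum_le_sum_abs _ _
    _ ≤ ∑ _i : Fin n, ‖v‖ * ((12 + 2 * n) * (M / r)) := by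
        refine Finset.sum_le_sum fun i _ => ?_
        rw [abs_mul]
        gcongr
        · exact PiLp.norm_apply_le v i
        · exact grad_est_coord hn hr hV hsub hu hM i
    _ = _ := by simp; ring

end estimates

/-! ### Cauchy estimates, limits of harmonic functions, Taylor's formula -/

section iterates
variable {n : ℕ} {V : Set (Sp n)} {f g w u : Sp n → ℝ} {x a : Sp n} {r M : ℝ}

/-- The `k`-fold directional derivative `(∂_v)^k u`. -/
noncomputable def Dk (v : Sp n) (k : ℕ) (u : Sp n → ℝ) : Sp n → ℝ := (fun f => pd f v)^[k] u

lemma Dk_succ (v : Sp n) (k : ℕ) (u : Sp n → ℝ) : Dk v (k + 1) u = Dk v k (pd u v) := rfl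

lemma Dk_succ' (v : Sp n) (k : ℕ) (u : Sp n → ℝ) : Dk v (k + 1) u = pd (Dk v k u) v :=
  Function.iterate_succ_apply' _ _ _

lemma Harm.Dk (hV : IsOpen V) (hu : Harm u V) (v : Sp n) (k : ℕ) : Harm (Dk v k u) V := by
  induction k with
  | zero => exact hu
  | succ k ih => rw [Dk_succ']; exact ih.pd hV v

/-- Each derivative is estimated at the cost of shrinking the ball by `ρ`. -/
lemma Dk_bound_aux (hn : 0 < n) (hV : IsOpen V) {ρ : ℝ} (hρ : 0 < ρ) (v : Sp n) (k : ℕ) :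
    ∀ (u : Sp n → ℝ) (M : ℝ), closedBall a (k * ρ) ⊆ V → Harm u V →
      (∀ x ∈ closedBall a (k * ρ), |u x| ≤ M) →
      |Dk v k u a| ≤ (n * (12 + 2 * n) * ‖v‖ / ρ) ^ k * M := by
  induction k with
  | zero =>
    intro u M _ _ hM
    simpa [Dk] using hM a (by simp)
  | succ k ih =>
    intro u M hsub hu hM
    have hball : ∀ y ∈ closedBall a (k * ρ), closedBall y ρ ⊆ closedBall a ((k + 1 : ℕ) * ρ) := by
      intro y hy
      apply closedBall_subset_closedBall'
      push_cast
      have := mem_closedBall.1 hy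
      linarith
    have hk : closedBall a (k * ρ) ⊆ closedBall a ((k + 1 : ℕ) * ρ) := by
      apply closedBall_subset_closedBall
      push_cast; nlinarith
    rw [Dk_succ]
    have := ih (pd u v) (n * (12 + 2 * n) * ‖v‖ / ρ * M) (hk.trans hsub) (hu.pd hV v)
      (fun y hy => grad_est hn hρ hV ((hball y hy).trans hsub) hu
        (fun x hx => hM x (hball y hy hx)) v)
    rw [pow_succ, mul_assoc]; exact this

/-- Cauchy estimates for harmonic functions; the factor `k!` (rather than a power of `k!`) is what
makes harmonic functions real analytic. -/
lemma Dk_bound (hn : 0 < n) (hV : IsOpen V) {δ : ℝ} (hδ : 0 < δ) (hsub : closedBall a δ ⊆ V)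
    (hu : Harm u V) (hM : ∀ x ∈ closedBall a δ, |u x| ≤ M) (v : Sp n) (k : ℕ) :
    |Dk v k u a| ≤ k.factorial * (Real.exp 1 * (n * (12 + 2 * n)) * ‖v‖ / δ) ^ k * M := by
  rcases Nat.eq_zero_or_pos k with rfl | hk
  · simpa [Dk] using hM a (mem_closedBall_self hδ.le)
  have hk' : (0 : ℝ) < k := by exact_mod_cast hk
  -- split the radius into `k` equal steps
  have e : (k : ℝ) * (δ / k) = δ := by field_simp
  have h := Dk_bound_aux (a := a) hn hV (ρ := δ / k) (by positivity) v k u M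
    (by rwa [e]) hu (by rwa [e])
  have hM0 : 0 ≤ M := (abs_nonneg _).trans (hM a (mem_closedBall_self hδ.le))
  refine h.trans ?_
  gcongr
  have h1 : (k : ℝ) ^ k ≤ k.factorial * Real.exp 1 ^ k := by
    have := Real.pow_div_factorial_le_exp (k : ℝ) hk'.le k
    rw [div_le_iff₀ (by positivity)] at this
    rw [← Real.exp_nat_mul, mul_one, mul_comm]; exact this
  calc (n * (12 + 2 * n) * ‖v‖ / (δ / k)) ^ k
      = (k : ℝ) ^ k * (n * (12 + 2 * n) * ‖v‖ / δ) ^ k := by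
        rw [← mul_pow]; congr 1; field_simp
    _ ≤ k.factorial * Real.exp 1 ^ k * (n * (12 + 2 * n) * ‖v‖ / δ) ^ k := by gcongr
    _ = _ := by rw [mul_assoc, ← mul_pow]; congr 2; ring

end iterates

section limits
variable {n : ℕ} {V : Set (Sp n)} {g : Sp n → ℝ} {u : ℕ → Sp n → ℝ}

/-- By the gradient estimate, the derivatives of a locally uniformly convergent sequence of
harmonic functions converge locally uniformly too. -/
lemma tendsto_pd (hn : 0 < n) (hV : IsOpen V) (hu : ∀ m, Harm (u m) V)
    (h : TendstoLocallyUniformlyOn u g atTop V) :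
    DifferentiableOn ℝ g V ∧
      ∀ v, TendstoLocallyUniformlyOn (fun m => pd (u m) v) (pd g v) atTop V := by
  set C : ℝ := n * (12 + 2 * n) with hC
  have hloc : ∀ a ∈ V, ∃ r > 0, ball a r ⊆ V ∧
      UniformCauchySeqOn (fun m => fderiv ℝ (u m)) atTop (ball a r) := by
    intro a ha
    obtain ⟨R, hR, hRV⟩ := nhds_basis_closedBall.mem_iff.1 (hV.mem_nhds ha)
    refine ⟨R / 2, by positivity,
      (ball_subset_closedBall.trans (closedBall_subset_closedBall (by linarith))).trans hRV, ?_⟩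
    have hun := ((tendstoLocallyUniformlyOn_iff_forall_isCompact hV).1 h _ hRV
      (isCompact_closedBall a R)).uniformCauchySeqOn
    rw [Metric.uniformCauchySeqOn_iff] at hun ⊢
    intro ε hε
    have hq : 0 < C / (R / 2) + 1 := by positivity
    obtain ⟨N, hN⟩ := hun (ε / (C / (R / 2) + 1)) (by positivity)
    refine ⟨N, fun m hm k hk x hx => ?_⟩
    have hsub : closedBall x (R / 2) ⊆ closedBall a R := by
      apply closedBall_subset_closedBall'
      have := (mem_ball.1 hx).le; linarith
    have hxV : x ∈ V := hRV (hsub (mem_closedBall_self (by positivity)))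
    have hd : fderiv ℝ (fun y => u m y - u k y) x = fderiv ℝ (u m) x - fderiv ℝ (u k) x :=
      fderiv_fun_sub ((hu m).1.diffAt hV hxV) ((hu k).1.diffAt hV hxV)
    rw [dist_eq_norm, ← hd]
    have hb : ‖fderiv ℝ (fun y => u m y - u k y) x‖ ≤
        C / (R / 2) * (ε / (C / (R / 2) + 1)) := by
      refine ContinuousLinearMap.opNorm_le_bound _ (by positivity) fun v => ?_
      have := grad_est hn (half_pos hR) hV (hsub.trans hRV) ((hu m).sub hV (hu k))
        (fun y hy => by
          have := (hN m hm k hk y (hsub hy)).le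
          rwa [Real.dist_eq] at this) v
      calc _ ≤ _ := this
        _ = _ := by rw [← hC]; ring
    refine hb.trans_lt ?_
    have h0 : 0 < ε / (C / (R / 2) + 1) := by positivity
    have : (C / (R / 2) + 1) * (ε / (C / (R / 2) + 1)) = ε := by
      rw [mul_comm]; exact div_mul_cancel₀ _ hq.ne'
    nlinarith
  set G : Sp n → (Sp n →L[ℝ] ℝ) := fun x => limUnder atTop fun m => fderiv ℝ (u m) x
  have hG : ∀ x ∈ V, Tendsto (fun m => fderiv ℝ (u m) x) atTop (𝓝 (G x)) := by
    intro x hx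
    obtain ⟨r, hr, _, hc⟩ := hloc x hx
    have hx' : CauchySeq fun m => fderiv ℝ (u m) x := hc.cauchySeq (mem_ball_self hr)
    exact hx'.tendsto_limUnder
  have hGu : TendstoLocallyUniformlyOn (fun m => fderiv ℝ (u m)) G atTop V := by
    rw [Metric.tendstoLocallyUniformlyOn_iff]
    intro ε hε x hx
    obtain ⟨r, hr, hrV, hc⟩ := hloc x hx
    have := hc.tendstoUniformlyOn_of_tendsto (fun y hy => hG y (hrV hy))
    exact ⟨ball x r, mem_nhdsWithin_of_mem_nhds (ball_mem_nhds x hr),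
      Metric.tendstoUniformlyOn_iff.1 this ε hε⟩
  have hD : ∀ x ∈ V, HasFDerivAt g (G x) x := fun x hx =>
    hasFDerivAt_of_tendstoLocallyUniformlyOn hV hGu
      (fun m y hy => ((hu m).1.diffAt hV hy).hasFDerivAt) (fun y hy => h.tendsto_at hy) hx
  refine ⟨fun x hx => (hD x hx).differentiableAt.differentiableWithinAt, fun v => ?_⟩
  rw [Metric.tendstoLocallyUniformlyOn_iff] at hGu ⊢
  intro ε hε x hx
  obtain ⟨t, ht, hev⟩ := hGu (ε / (‖v‖ + 1)) (by positivity) x hx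
  refine ⟨t ∩ V, inter_mem ht self_mem_nhdsWithin, ?_⟩
  filter_upwards [hev] with m hm y hy
  have h1 := hm y hy.1
  simp only [pd]
  rw [(hD y hy.2).fderiv, dist_eq_norm, ← _root_.sub_apply]
  rw [dist_eq_norm, lt_div_iff₀ (by positivity)] at h1
  have h2 := (G y - fderiv ℝ (u m) y).le_opNorm v
  nlinarith [norm_nonneg (G y - fderiv ℝ (u m) y), norm_nonneg v]

/-- Locally uniform limits of harmonic functions are harmonic. -/
lemma harm_limit (hn : 0 < n) (hV : IsOpen V) (hu : ∀ m, Harm (u m) V)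
    (h : TendstoLocallyUniformlyOn u g atTop V) : Harm g V := by
  constructor
  · rw [contDiffOn_infty]
    intro N
    induction N generalizing u g with
    | zero =>
      simpa using (tendsto_pd hn hV hu h).1.continuousOn
    | succ N ih =>
      obtain ⟨h1, h2⟩ := tendsto_pd hn hV hu h
      have := (contDiffOn_succ_iff_fderiv_of_isOpen (𝕜 := ℝ) (f := g) (n := (N : ℕ)) hV).2
        ⟨h1, by simp, contDiffOn_clm_apply.2 fun v => ih (fun m => (hu m).pd hV v) (h2 v)⟩
      exact_mod_cast this
  · intro x hx
    have hlim : Tendsto (fun m => lap (u m) x) atTop (𝓝 (lap g x)) := by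
      refine tendsto_finsetSum _ fun i _ => ?_
      have h1 := (tendsto_pd hn hV hu h).2 (ee i)
      exact ((tendsto_pd hn hV (fun m => (hu m).pd hV _) h1).2 (ee i)).tendsto_at hx
    have h0 : (fun m => lap (u m) x) = fun _ => 0 := funext fun m => (hu m).2 x hx
    rw [h0] at hlim
    exact tendsto_nhds_unique hlim tendsto_const_nhds

end limits

/-- Taylor's formula with remainder for a sequence of functions, each the derivative of the one
before. -/
lemma taylor_bound {a b : ℝ} (N : ℕ) : ∀ (G : ℕ → ℝ → ℝ) (B : ℝ),
    (∀ k, ∀ t ∈ Icc a b, HasDerivAt (G k) (G (k + 1) t) t) → (∀ t ∈ Icc a b, |G N t| ≤ B) →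
    ∀ t ∈ Icc a b, |G 0 t - ∑ j ∈ Finset.range N, G j a * (t - a) ^ j / j.factorial|
      ≤ B * (t - a) ^ N / N.factorial := by
  induction N with
  | zero => intro G B _ hB t ht; simpa using hB t ht
  | succ N ih =>
    intro G B hG hB
    have h1 := ih (fun k => G (k + 1)) B (fun k t ht => hG (k + 1) t ht) hB
    have hpow : ∀ (j : ℕ) (t : ℝ), HasDerivAt (fun t : ℝ => (t - a) ^ (j + 1) / (j + 1).factorial)
        ((t - a) ^ j / j.factorial) t := by
      intro j t
      have := (((hasDerivAt_id t).sub_const a).pow (j + 1)).div_const ((j + 1).factorial : ℝ)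
      refine this.congr_deriv ?_
      have hj : (j.factorial : ℝ) ≠ 0 := by positivity
      rw [Nat.factorial_succ]; push_cast
      simp; field_simp
    have hd : ∀ t ∈ Icc a b, HasDerivAt
        (fun t => G 0 t - ∑ j ∈ Finset.range (N + 1), G j a * (t - a) ^ j / j.factorial)
        (G 1 t - ∑ j ∈ Finset.range N, G (j + 1) a * (t - a) ^ j / j.factorial) t := by
      intro t ht
      simp only [Finset.sum_range_succ']
      refine (hG 0 t ht).sub ?_
      simp only [pow_zero]
      refine HasDerivAt.add_const _ ?_
      refine HasDerivAt.fun_sum fun j _ => ?_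
      simpa only [mul_div_assoc] using (hpow j t).const_mul (G (j + 1) a)
    have hbd : ∀ t, HasDerivAt (fun t => B * (t - a) ^ (N + 1) / (N + 1).factorial)
        (B * (t - a) ^ N / N.factorial) t := by
      intro t
      simpa only [mul_div_assoc] using (hpow N t).const_mul B
    intro t ht
    have := image_norm_le_of_norm_deriv_right_le_deriv_boundary
      (f := fun t => G 0 t - ∑ j ∈ Finset.range (N + 1), G j a * (t - a) ^ j / j.factorial)
      (a := a) (b := b)
      (fun t ht => (hd t ht).continuousAt.continuousWithinAt)
      (fun t ht => (hd t (Ico_subset_Icc_self ht)).hasDerivWithinAt)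
      (B := fun t => B * (t - a) ^ (N + 1) / (N + 1).factorial)
      (by simp [Finset.sum_range_succ']) hbd
      (fun t ht => h1 t (Ico_subset_Icc_self ht)) ht
    exact this

/-! ### Runge approximation on star-shaped compact sets -/

section runge
variable {n : ℕ} {V K : Set (Sp n)} {f g w u : Sp n → ℝ} {x a : Sp n} {r M : ℝ}

lemma hasDerivAt_Dk (hV : IsOpen V) (hu : Harm u V) (x : Sp n) (k : ℕ) (t : ℝ)
    (ht : t • x ∈ V) :
    HasDerivAt (fun t : ℝ => Dk x k u (t • x)) (Dk x (k + 1) u (t • x)) t := by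
  have := hasDerivAt_line (x := 0) hV (hu.Dk hV x k).1 x t (by simpa using ht)
  simpa [Dk_succ'] using this

lemma harm_univ_of_balls (h : ∀ R > 0, Harm u (ball 0 R)) : Harm u univ := by
  have hx : ∀ x : Sp n, x ∈ ball (0 : Sp n) (‖x‖ + 1) := fun x => by simp
  refine ⟨fun x _ => ?_, fun x _ => (h (‖x‖ + 1) (by positivity)).2 x (hx x)⟩
  exact ((h (‖x‖ + 1) (by positivity)).1.contDiffAt
    (isOpen_ball.mem_nhds (hx x))).contDiffWithinAt

/-- The homogeneous Taylor polynomials at the origin of a harmonic function are harmonic: the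
`k`-th one is a locally uniform limit of rescaled Taylor remainders `x ↦ u (s x) - …`. -/
lemma harm_taylor_poly (hn : 0 < n) (hV : IsOpen V) (h0 : (0 : Sp n) ∈ V) (hu : Harm u V)
    (k : ℕ) : Harm (fun x => Dk x k u 0) univ := by
  induction k using Nat.strong_induction_on with
  | _ k ih =>
  refine harm_univ_of_balls fun R hR => ?_
  obtain ⟨δ', hδ', hδV⟩ := nhds_basis_closedBall.mem_iff.1 (hV.mem_nhds h0)
  obtain ⟨δ, hδ, rfl⟩ : ∃ δ > 0, δ' = 2 * δ := ⟨δ' / 2, by positivity, by ring⟩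
  obtain ⟨M, hM⟩ := (isCompact_closedBall (0 : Sp n) (2 * δ)).exists_bound_of_continuousOn
    (hu.1.continuousOn.mono hδV)
  have hM0 : 0 ≤ M := (norm_nonneg _).trans (hM 0 (by simp; positivity))
  set A : ℝ := Real.exp 1 * (n * (12 + 2 * n)) * R / δ with hA
  have hA0 : 0 ≤ A := by positivity
  set s0 : ℝ := δ / R with hs0
  have hs0pos : 0 < s0 := by positivity
  set B : ℝ := (k + 1).factorial * A ^ (k + 1) * M with hB
  have hin : ∀ x ∈ ball (0 : Sp n) R, ∀ t ∈ Icc 0 s0,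
      closedBall (t • x) δ ⊆ closedBall 0 (2 * δ) := by
    intro x hx t ht
    apply closedBall_subset_closedBall'
    have hx' : ‖x‖ ≤ R := by simpa using (mem_ball_zero_iff.1 hx).le
    have : ‖t • x‖ ≤ s0 * R := by
      rw [norm_smul, Real.norm_of_nonneg ht.1]
      exact mul_le_mul ht.2 hx' (norm_nonneg _) hs0pos.le
    have e : s0 * R = δ := by rw [hs0]; field_simp
    rw [dist_zero_right]; linarith
  have hinV : ∀ x ∈ ball (0 : Sp n) R, ∀ t ∈ Icc 0 s0, t • x ∈ V := fun x hx t ht =>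
    hδV (hin x hx t ht (mem_closedBall_self hδ.le))
  have hbound : ∀ x ∈ ball (0 : Sp n) R, ∀ t ∈ Icc 0 s0, |Dk x (k + 1) u (t • x)| ≤ B := by
    intro x hx t ht
    have hx' : ‖x‖ ≤ R := by simpa using (mem_ball_zero_iff.1 hx).le
    refine (Dk_bound hn hV hδ ((hin x hx t ht).trans hδV) hu
      (fun y hy => hM y (hin x hx t ht hy)) x (k + 1)).trans ?_
    rw [hB, hA]; gcongr
  set s : ℕ → ℝ := fun i => s0 * (1 / ((i : ℝ) + 1)) with hs
  have hspos : ∀ i, 0 < s i := fun i => by positivity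
  have hsle : ∀ i, s i ≤ s0 := fun i => by
    refine mul_le_of_le_one_right hs0pos.le ?_
    rw [div_le_one (by positivity)]
    have : (0 : ℝ) ≤ i := Nat.cast_nonneg i
    linarith
  -- the `k`-th Taylor remainder of `t ↦ u (t x)` at `t = s i`, rescaled to converge as `s i → 0`
  set T : ℕ → Sp n → ℝ := fun i x => (k.factorial / s i ^ k) *
    (u (s i • x) - ∑ j ∈ Finset.range k, (s i ^ j / j.factorial) * Dk x j u 0) with hT
  have hTH : ∀ i, Harm (T i) (ball 0 R) := by
    intro i
    refine Harm.const_mul _ isOpen_ball (Harm.sub isOpen_ball ?_ ?_)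
    · exact hu.dilate (s i) hV isOpen_ball fun x hx => hinV x hx _ ⟨(hspos i).le, hsle i⟩
    · exact Harm.sum _ isOpen_ball fun j hj => Harm.const_mul _ isOpen_ball
        ((ih j (Finset.mem_range.1 hj)).mono (subset_univ _))
  have hest : ∀ i, ∀ x ∈ ball (0 : Sp n) R, |T i x - Dk x k u 0| ≤ B * s i := by
    intro i x hx
    have h1 := taylor_bound (a := 0) (b := s0) (k + 1) (fun k t => Dk x k u (t • x)) B
      (fun j t ht => hasDerivAt_Dk hV hu x j t (hinV x hx t ht)) (hbound x hx) (s i)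
      ⟨(hspos i).le, hsle i⟩
    simp only [sub_zero, zero_smul, Finset.sum_range_succ] at h1
    have h2 : Dk x 0 u (s i • x) = u (s i • x) := rfl
    rw [h2] at h1
    have hp : 0 < s i ^ k := pow_pos (hspos i) k
    have hk : (0 : ℝ) < k.factorial := by positivity
    have e : T i x - Dk x k u 0 = (k.factorial / s i ^ k) * (u (s i • x) -
        (∑ j ∈ Finset.range k, Dk x j u 0 * s i ^ j / j.factorial
          + Dk x k u 0 * s i ^ k / k.factorial)) := by
      have : ∑ j ∈ Finset.range k, (s i ^ j / j.factorial) * Dk x j u 0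
          = ∑ j ∈ Finset.range k, Dk x j u 0 * s i ^ j / j.factorial :=
        Finset.sum_congr rfl fun j _ => by ring
      simp only [hT]; rw [this]; field_simp; ring
    rw [e, abs_mul, abs_of_pos (by positivity)]
    refine (mul_le_mul_of_nonneg_left h1 (by positivity)).trans ?_
    have e2 : (k.factorial / s i ^ k) * (B * s i ^ (k + 1) / (k + 1).factorial)
        = B * s i / (k + 1) := by
      rw [Nat.factorial_succ, pow_succ]; push_cast; field_simp
    rw [e2]
    have hB0 : 0 ≤ B := by positivity
    refine div_le_self (mul_nonneg hB0 (hspos i).le) ?_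
    have : (0 : ℝ) ≤ k := Nat.cast_nonneg k
    linarith
  refine harm_limit hn isOpen_ball hTH (TendstoUniformlyOn.tendstoLocallyUniformlyOn ?_)
  rw [Metric.tendstoUniformlyOn_iff]
  intro ε hε
  have hlim : Tendsto (fun i => B * s i) atTop (𝓝 0) := by
    have := (tendsto_one_div_add_atTop_nhds_zero_nat (𝕜 := ℝ)).const_mul s0 |>.const_mul B
    simpa [hs] using this
  filter_upwards [hlim.eventually (gt_mem_nhds hε)] with i hi x hx
  rw [dist_comm, Real.dist_eq]
  exact (hest i x hx).trans_lt hi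

/-- `g` is a uniform limit on `K` of functions harmonic on the whole space. -/
def Approx (K : Set (Sp n)) (g : Sp n → ℝ) : Prop :=
  ∀ ε > 0, ∃ h, Harm h univ ∧ ∀ x ∈ K, |g x - h x| ≤ ε

lemma approx_sum (N : ℕ) (c : ℕ → ℝ) (g : ℕ → Sp n → ℝ) (h : ∀ j, Approx K (g j)) :
    Approx K (fun x => ∑ j ∈ Finset.range N, g j x * c j) := by
  induction N with
  | zero => exact fun ε hε => ⟨fun _ => 0, harm_const 0, fun x _ => by simpa using hε.le⟩
  | succ N ih =>
    intro ε hε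
    obtain ⟨p, hp, hp'⟩ := ih (ε / 2) (by positivity)
    obtain ⟨q, hq, hq'⟩ := h N (ε / 2 / (|c N| + 1)) (by positivity)
    refine ⟨fun x => p x + c N * q x, hp.add isOpen_univ (hq.const_mul _ isOpen_univ),
      fun x hx => ?_⟩
    simp only [Finset.sum_range_succ]
    have e : (∑ j ∈ Finset.range N, g j x * c j + g N x * c N) - (p x + c N * q x)
        = (∑ j ∈ Finset.range N, g j x * c j - p x) + c N * (g N x - q x) := by ring
    rw [e]
    refine (abs_add_le _ _).trans ?_
    have h1 := hp' x hx
    have h2 := hq' x hx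
    rw [le_div_iff₀ (by positivity)] at h2
    rw [abs_mul]
    nlinarith [abs_nonneg (g N x - q x), abs_nonneg (c N)]

/-- Runge approximation for star-shaped compacta. The function `t ↦ u (t ·)` from `[0, 1]` to
`C(K)` is real analytic with a uniform radius of convergence, and its Taylor coefficients at `0`
are harmonic polynomials, so approximability propagates from `t = 0` to `t = 1` in finitely many
steps. -/
lemma runge (hn : 0 < n) (hK : IsCompact K) (hstar : ∀ x ∈ K, ∀ t ∈ Icc (0 : ℝ) 1, t • x ∈ K)
    (hV : IsOpen V) (hKV : K ⊆ V) (hu : Harm u V) : Approx K u := by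
  rcases K.eq_empty_or_nonempty with rfl | ⟨x0, hx0⟩
  · exact fun ε hε => ⟨fun _ => 0, harm_const 0, by simp⟩
  have h0K : (0 : Sp n) ∈ K := by simpa using hstar x0 hx0 0 (by simp)
  obtain ⟨δ, hδ, hδV⟩ := hK.exists_cthickening_subset_open hV hKV
  obtain ⟨M, hM⟩ := (hK.cthickening (r := δ)).exists_bound_of_continuousOn
    (hu.1.continuousOn.mono hδV)
  obtain ⟨R, hR⟩ := hK.isBounded.exists_norm_le
  have hR0 : 0 ≤ R := (norm_nonneg _).trans (hR x0 hx0)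
  have hin : ∀ x ∈ K, closedBall x δ ⊆ cthickening δ K := fun x hx =>
    closedBall_subset_cthickening hx δ
  have hM0 : 0 ≤ M := (norm_nonneg _).trans (hM x0 (self_subset_cthickening _ hx0))
  set A : ℝ := Real.exp 1 * (n * (12 + 2 * n)) * R / δ with hA
  have hA0 : 0 ≤ A := by positivity
  have hbound : ∀ k, ∀ x ∈ K, ∀ t ∈ Icc (0 : ℝ) 1,
      |Dk x k u (t • x)| ≤ k.factorial * A ^ k * M := by
    intro k x hx t ht
    refine (Dk_bound hn hV hδ ((hin _ (hstar x hx t ht)).trans hδV) hu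
      (fun y hy => hM y (hin _ (hstar x hx t ht) hy)) x k).trans ?_
    rw [hA]; gcongr; exact hR x hx
  -- a step length inside the radius of convergence, which is at least `1 / A`
  set ρ : ℝ := 1 / (4 * A + 1) with hρ
  have hρ0 : 0 < ρ := by positivity
  have hρA : 2 * A * ρ ≤ 1 / 2 := by
    rw [hρ, mul_one_div, div_le_div_iff₀ (by positivity) (by positivity)]; linarith
  -- all Taylor coefficients are propagated at once, since the next step needs every one of them
  have step : ∀ t0 ∈ Icc (0 : ℝ) 1, ∀ t1 ∈ Icc (0 : ℝ) 1, t0 ≤ t1 → t1 - t0 ≤ ρ →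
      (∀ k, Approx K fun x => Dk x k u (t0 • x)) → ∀ k, Approx K fun x => Dk x k u (t1 • x) := by
    intro t0 ht0 t1 ht1 h01 hlt hS k ε hε
    set D : ℝ := k.factorial * (2 * A) ^ k * M with hD
    have hD0 : 0 ≤ D := by positivity
    obtain ⟨N, hN⟩ := exists_pow_lt_of_lt_one (show 0 < ε / 2 / (D + 1) by positivity)
      (show (1 / 2 : ℝ) < 1 by norm_num)
    obtain ⟨h, hh, hh'⟩ := approx_sum N (fun j => (t1 - t0) ^ j / j.factorial)
      (fun j x => Dk x (k + j) u (t0 • x)) (fun j => hS (k + j)) (ε / 2) (by positivity)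
    refine ⟨h, hh, fun x hx => ?_⟩
    have h1 := taylor_bound (a := t0) (b := t1) N (fun j t => Dk x (k + j) u (t • x))
      ((k + N).factorial * A ^ (k + N) * M)
      (fun j t ht => hasDerivAt_Dk hV hu x (k + j) t
        (hKV (hstar x hx t ⟨ht0.1.trans ht.1, ht.2.trans ht1.2⟩)))
      (fun t ht => hbound _ x hx t ⟨ht0.1.trans ht.1, ht.2.trans ht1.2⟩) t1 ⟨h01, le_rfl⟩
    have h2 := hh' x hx
    -- the binomial coefficient `(k + N)! / (k! N!)` is at most `2 ^ (k + N)`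
    have hch : ((k + N).factorial : ℝ) ≤ 2 ^ (k + N) * k.factorial * N.factorial := by
      have h3 : (k + N).factorial = (k + N).choose k * k.factorial * N.factorial := by
        have := Nat.choose_mul_factorial_mul_factorial (Nat.le_add_right k N)
        simpa using this.symm
      have h4 : (k + N).choose k ≤ 2 ^ (k + N) := Nat.choose_le_two_pow _ _
      rw [h3]; push_cast
      have h5 : ((k + N).choose k : ℝ) ≤ 2 ^ (k + N) := by exact_mod_cast h4
      gcongr
    have h6 : (k + N).factorial * A ^ (k + N) * M * (t1 - t0) ^ N / N.factorial ≤ ε / 2 := by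
      have h7 : (t1 - t0) ^ N ≤ ρ ^ N := pow_le_pow_left₀ (by linarith) hlt N
      have h8 : (2 * A * ρ) ^ N ≤ (1 / 2) ^ N := pow_le_pow_left₀ (by positivity) hρA N
      calc (k + N).factorial * A ^ (k + N) * M * (t1 - t0) ^ N / N.factorial
          ≤ (2 ^ (k + N) * k.factorial * N.factorial) * A ^ (k + N) * M * ρ ^ N / N.factorial := by
            gcongr
        _ = D * (2 * A * ρ) ^ N := by
            rw [hD]
            have : (N.factorial : ℝ) ≠ 0 := by positivity
            rw [mul_pow, mul_pow, pow_add, pow_add, mul_pow]; field_simp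
        _ ≤ D * (1 / 2) ^ N := by gcongr
        _ ≤ D * (ε / 2 / (D + 1)) := by gcongr
        _ ≤ ε / 2 := by
            rw [mul_div_assoc', div_le_iff₀ (by positivity)]; nlinarith
    have h9 := h1.trans h6
    simp only [mul_div_assoc, add_zero] at h9 h2
    have e : Dk x k u (t1 • x) - h x = (Dk x k u (t1 • x) -
        ∑ j ∈ Finset.range N, Dk x (k + j) u (t0 • x) * ((t1 - t0) ^ j / j.factorial)) +
        (∑ j ∈ Finset.range N, Dk x (k + j) u (t0 • x) * ((t1 - t0) ^ j / j.factorial) - h x) := by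
      ring
    rw [e]
    refine (abs_add_le _ _).trans ?_
    linarith
  have all : ∀ i : ℕ, ∀ k, Approx K fun x => Dk x k u ((min (i * ρ) 1) • x) := by
    intro i
    induction i with
    | zero =>
      intro k ε hε
      refine ⟨_, harm_taylor_poly hn hV (hKV h0K) hu k, fun x _ => ?_⟩
      simpa using hε.le
    | succ i ih =>
      have hm : ∀ i : ℕ, min (i * ρ) 1 ∈ Icc (0 : ℝ) 1 := fun i =>
        ⟨le_min (by positivity) zero_le_one, min_le_right _ _⟩
      refine step _ (hm i) _ (hm (i + 1)) ?_ ?_ ih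
      · apply min_le_min_right; push_cast; nlinarith
      · push_cast
        rcases le_total (i * ρ) 1 with h | h
        · rw [min_eq_left h]
          have := min_le_left ((i + 1 : ℝ) * ρ) 1
          linarith
        · rw [min_eq_right h]
          have := min_le_right ((i + 1 : ℝ) * ρ) 1
          linarith
  obtain ⟨i, hi⟩ := exists_nat_ge (1 / ρ)
  have := all i 0
  rw [min_eq_right ((div_le_iff₀ hρ0).1 hi)] at this
  simpa [Dk] using this

end runge

/-! ### The Poisson equation on balls -/

section solve
open MeasureTheory
open scoped FourierTransform SchwartzMap
variable {n : ℕ}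

/-- All polynomial moments of `G` are integrable, so that its Fourier transform is smooth. -/
def Mom (G : Sp n → ℂ) : Prop :=
  AEStronglyMeasurable G ∧ ∀ k : ℕ, Integrable fun ξ => ‖ξ‖ ^ k * ‖G ξ‖

lemma Mom.of_le {G H : Sp n → ℂ} (hG : Mom G) (hH : AEStronglyMeasurable H) (C : ℝ) (l : ℕ)
    (h : ∀ ξ, ‖H ξ‖ ≤ C * (‖ξ‖ ^ l * ‖G ξ‖)) : Mom H := by
  refine ⟨hH, fun k => ((hG.2 (k + l)).const_mul C).mono' ?_ (ae_of_all _ fun ξ => ?_)⟩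
  · exact (continuous_norm.pow k).aestronglyMeasurable.mul hH.norm
  · rw [Real.norm_of_nonneg (by positivity), pow_add]
    calc ‖ξ‖ ^ k * ‖H ξ‖ ≤ ‖ξ‖ ^ k * (C * (‖ξ‖ ^ l * ‖G ξ‖)) := by gcongr; exact h ξ
      _ = _ := by ring

lemma Mom.integrable {G : Sp n → ℂ} (hG : Mom G) : Integrable G :=
  (integrable_norm_iff hG.1).1 (by simpa using hG.2 0)

/-- Multiplication by the symbol of `∂_v` on the Fourier side. -/
noncomputable def symb (v : Sp n) (G : Sp n → ℂ) : Sp n → ℂ :=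
  fun ξ => -(2 * Real.pi * Complex.I) * ((inner ℝ ξ v : ℝ) : ℂ) * G ξ

lemma Mom.symb {G : Sp n → ℂ} (hG : Mom G) (v : Sp n) : Mom (symb v G) := by
  refine hG.of_le ?_ (2 * Real.pi * ‖v‖) 1 fun ξ => ?_
  · refine AEStronglyMeasurable.mul (Continuous.aestronglyMeasurable ?_) hG.1
    fun_prop
  · have h := norm_inner_le_norm (𝕜 := ℝ) ξ v
    have hpi := Real.pi_pos.le
    simp only [_root_.symb, norm_mul, norm_neg, Complex.norm_real, Complex.norm_I, mul_one, pow_one,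
      Complex.norm_ofNat, Real.norm_of_nonneg hpi]
    rw [Real.norm_eq_abs] at h
    calc 2 * Real.pi * ‖(inner ℝ ξ v : ℝ)‖ * ‖G ξ‖ ≤ 2 * Real.pi * (‖ξ‖ * ‖v‖) * ‖G ξ‖ := by
          gcongr; exact h
      _ = _ := by ring

lemma pd_fourier {G : Sp n → ℂ} (hG : Mom G) (v : Sp n) : pd (𝓕 G) v = 𝓕 (symb v G) := by
  funext x
  have h := Real.hasFDerivAt_fourier hG.integrable (by simpa using hG.2 1) x
  have hi : Integrable (VectorFourier.fourierSMulRight (innerSL ℝ) G) := by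
    refine ((hG.2 1).const_mul (2 * Real.pi * ‖innerSL ℝ (E := Sp n)‖)).mono'
      hG.1.fourierSMulRight (ae_of_all _ fun ξ => ?_)
    refine (VectorFourier.norm_fourierSMulRight_le _ _ _).trans (le_of_eq ?_)
    simp; ring
  rw [pd, h.fderiv, Real.fourier_continuousLinearMap_apply hi]
  have e : (fun ξ => VectorFourier.fourierSMulRight (innerSL ℝ) G ξ v) = symb v G := by
    funext ξ
    simp [VectorFourier.fourierSMulRight_apply, symb, mul_assoc]
    exact Or.inl rfl
  rw [e]

lemma fourier_smooth {G : Sp n → ℂ} (hG : Mom G) : ContDiff ℝ (⊤ : ℕ∞) (𝓕 G) :=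
  Real.contDiff_fourier fun k _ => hG.2 k

lemma pd_re {g : Sp n → ℂ} (hg : ContDiff ℝ (⊤ : ℕ∞) g) (v : Sp n) :
    pd (fun x => (g x).re) v = fun x => (pd g v x).re := by
  funext x
  have h : HasFDerivAt g (fderiv ℝ g x) x := (hg.differentiable (by simp) x).hasFDerivAt
  have := (Complex.reCLM.hasFDerivAt (x := g x)).comp x h
  simp only [pd]
  rw [show (fun x => (g x).re) = Complex.reCLM ∘ g from rfl, this.fderiv]
  rfl

lemma fourier_integrable {G : Sp n → ℂ} (hG : Integrable G) (x : Sp n) :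
    Integrable fun ξ => 𝐞 (-(inner ℝ ξ x : ℝ)) • G ξ :=
  (Real.fourierIntegral_convergent_iff x).2 hG

/-- On the Fourier side the Laplacian is multiplication by `-4π²|ξ|²`. -/
lemma lap_fourier {G : Sp n → ℂ} (hG : Mom G) (x : Sp n) :
    lap (fun x => (𝓕 G x).re) x
      = (𝓕 (fun ξ => -(4 * Real.pi ^ 2 * ‖ξ‖ ^ 2 : ℝ) * G ξ) x).re := by
  have e : ∀ i : Fin n, pd (pd (fun x => (𝓕 G x).re) (ee i)) (ee i) x
      = (𝓕 (symb (ee i) (symb (ee i) G)) x).re := by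
    intro i
    rw [pd_re (fourier_smooth hG), pd_fourier hG, pd_re (fourier_smooth (hG.symb _)),
      pd_fourier (hG.symb _)]
  simp only [lap, e]
  rw [← Complex.re_sum]
  congr 1
  simp only [Real.fourier_eq]
  rw [← integral_finsetSum _ fun i _ =>
    fourier_integrable ((hG.symb (ee i)).symb (ee i)).integrable x]
  congr 1
  funext ξ
  rw [← Finset.smul_sum]
  congr 1
  have h2 : ∀ i, symb (ee i) (symb (ee i) G) ξ
      = -(4 * Real.pi ^ 2 : ℝ) * G ξ * ((ξ i ^ 2 : ℝ) : ℂ) := by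
    intro i
    have : (inner ℝ ξ (ee i) : ℝ) = ξ i := by simp [ee, EuclideanSpace.inner_single_right]
    simp only [symb, this]
    push_cast
    linear_combination (4 * (Real.pi : ℂ) ^ 2 * (ξ i : ℂ) ^ 2 * G ξ) * Complex.I_sq
  simp only [h2]
  rw [← Finset.mul_sum, ← Complex.ofReal_sum]
  have h3 : ∑ i, ξ i ^ 2 = ‖ξ‖ ^ 2 := by
    rw [EuclideanSpace.norm_sq_eq]; simp
  rw [h3]; push_cast; ring

/-- The unimodular character `ξ ↦ exp (2πi ⟨ξ, a⟩)`. -/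
noncomputable def chr (a ξ : Sp n) : ℂ := (𝐞 (inner ℝ ξ a : ℝ) : ℂ)

lemma chr_bound (a ξ : Sp n) : ‖1 - chr a ξ‖ ≤ 2 * Real.pi * (‖ξ‖ * ‖a‖) := by
  rw [norm_sub_rev, chr, Real.fourierChar_apply, mul_comm]
  refine Real.norm_exp_I_mul_ofReal_sub_one_le.trans ?_
  rw [norm_mul, Real.norm_of_nonneg (by positivity)]
  gcongr
  exact norm_inner_le_norm _ _

lemma continuous_chr (a : Sp n) : Continuous (chr a) := by
  unfold chr
  have : Continuous fun t : ℝ => (𝐞 t : ℂ) := by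
    simp only [Real.fourierChar_apply]; fun_prop
  exact this.comp (by fun_prop)

/-- Multiplication by a character translates the Fourier transform. -/
lemma fourier_chr (a : Sp n) (S : Sp n → ℂ) (x : Sp n) :
    𝓕 (fun ξ => chr a ξ * S ξ) x = 𝓕 S (x - a) := by
  simp only [Real.fourier_eq]
  congr 1
  funext ξ
  rw [inner_sub_right, neg_sub, sub_eq_neg_add, AddChar.map_add_eq_mul, chr]
  simp only [Circle.smul_def, Circle.coe_mul, smul_eq_mul]
  ring

/-- Solvability of the Poisson equation on balls. The datum is first replaced by its second
difference `f x - 2 f (x - a) + f (x - 2a)` with `a` so large that this does not change it on the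
ball; the Fourier transform then vanishes to second order at `0` and may be divided by `-4π²|ξ|²`,
in every dimension. -/
lemma poisson_ball (hn : 0 < n) {f : Sp n → ℝ} (hf : ContDiff ℝ (⊤ : ℕ∞) f)
    (hc : HasCompactSupport f) (R : ℝ) :
    ∃ u : Sp n → ℝ, ContDiff ℝ (⊤ : ℕ∞) u ∧ ∀ x ∈ ball (0 : Sp n) R, lap u x = f x := by
  obtain ⟨R', hR'⟩ := hc.isCompact.isBounded.exists_norm_le
  set a : Sp n := (|R| + |R'| + 1) • ee ⟨0, hn⟩ with ha
  have hna : ‖a‖ = |R| + |R'| + 1 := by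
    rw [ha, norm_smul, Real.norm_of_nonneg (by positivity)]; simp [ee]
  have hvan : ∀ x ∈ ball (0 : Sp n) R, ∀ s : ℝ, 1 ≤ s → f (x - s • a) = 0 := by
    intro x hx s hs
    by_contra h
    have h1 := hR' _ (subset_tsupport f h)
    have h2 : ‖s • a‖ ≤ ‖x‖ + ‖x - s • a‖ := by
      have := norm_sub_le x (x - s • a); simpa using this
    rw [norm_smul, Real.norm_of_nonneg (by linarith), hna] at h2
    have h3 : ‖x‖ < R := mem_ball_zero_iff.1 hx
    nlinarith [le_abs_self R, le_abs_self R', abs_nonneg R, abs_nonneg R']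
  let fS : 𝓢(Sp n, ℂ) := HasCompactSupport.toSchwartzMap (f := fun x => (f x : ℂ))
    (hc.comp_left Complex.ofReal_zero) (Complex.ofRealCLM.contDiff.comp hf)
  let S : 𝓢(Sp n, ℂ) := 𝓕⁻ fS
  have hS : 𝓕 (S : Sp n → ℂ) = fun x => (f x : ℂ) := by
    rw [← SchwartzMap.fourier_coe]
    simp only [S, FourierTransform.fourier_fourierInv_eq]
    rfl
  have hSM : Mom (S : Sp n → ℂ) :=
    ⟨S.continuous.aestronglyMeasurable, fun k => S.integrable_pow_mul volume k⟩
  -- the value `0` at `ξ = 0` given by division by zero is harmless: the numerator vanishes there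
  set m : Sp n → ℂ := fun ξ =>
    -((1 - chr a ξ) ^ 2 * S ξ) / ((4 * Real.pi ^ 2 * ‖ξ‖ ^ 2 : ℝ) : ℂ) with hm
  have hmM : Mom m := by
    refine hSM.of_le ?_ (‖a‖ ^ 2) 0 fun ξ => ?_
    · refine Measurable.aestronglyMeasurable (Measurable.div ?_ ?_)
      · exact Continuous.measurable
          (((continuous_const.sub (continuous_chr a)).pow 2).mul S.continuous).neg
      · exact Continuous.measurable (by fun_prop)
    · rcases eq_or_ne ξ 0 with rfl | hξ
      · simp [hm]; positivity
      · have hξ' : 0 < ‖ξ‖ := norm_pos_iff.2 hξ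
        have hpi := Real.pi_pos
        have hq : 0 < 4 * Real.pi ^ 2 * ‖ξ‖ ^ 2 := by positivity
        rw [hm, norm_div, norm_neg, norm_mul, norm_pow, Complex.norm_real, pow_zero, one_mul,
          Real.norm_of_nonneg hq.le, div_le_iff₀ hq]
        have h1 := chr_bound a ξ
        calc ‖1 - chr a ξ‖ ^ 2 * ‖S ξ‖ ≤ (2 * Real.pi * (‖ξ‖ * ‖a‖)) ^ 2 * ‖S ξ‖ := by gcongr
          _ = _ := by ring
  refine ⟨fun x => (𝓕 m x).re, Complex.reCLM.contDiff.comp (fourier_smooth hmM), fun x hx => ?_⟩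
  rw [lap_fourier hmM]
  have e1 : (fun ξ => -((4 * Real.pi ^ 2 * ‖ξ‖ ^ 2 : ℝ) : ℂ) * m ξ)
      = fun ξ => S ξ - (2 * (chr a ξ * S ξ) - chr a ξ * (chr a ξ * S ξ)) := by
    funext ξ
    rcases eq_or_ne ξ 0 with rfl | hξ
    · simp [chr]; ring
    · have hξ' : ((4 * Real.pi ^ 2 * ‖ξ‖ ^ 2 : ℝ) : ℂ) ≠ 0 := by
        have := norm_pos_iff.2 hξ
        have hpi := Real.pi_pos
        exact_mod_cast (by positivity : (4 * Real.pi ^ 2 * ‖ξ‖ ^ 2 : ℝ) ≠ 0)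
      simp only [hm]
      rw [mul_div_assoc', mul_comm, mul_div_assoc, neg_div, div_self hξ']
      ring
  have hchr : ∀ G : Sp n → ℂ, Integrable G → Integrable fun ξ => chr a ξ * G ξ := by
    intro G hG
    refine hG.norm.mono' ((continuous_chr a).aestronglyMeasurable.mul hG.1)
      (ae_of_all _ fun ξ => ?_)
    rw [norm_mul, chr, Circle.norm_coe, one_mul]
  have hI := hSM.integrable
  have hI1 := hchr _ hI
  have hI2 := hchr _ hI1
  have e2 : 𝓕 (fun ξ => S ξ - (2 * (chr a ξ * S ξ) - chr a ξ * (chr a ξ * S ξ))) x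
      = f x - (2 * f (x - a) - f (x - a - a)) := by
    have h1 := congrFun hS
    have h2 := (fourier_chr a (fun ξ => chr a ξ * S ξ) x).trans (fourier_chr a S (x - a))
    rw [h1] at h2
    have h3 := fourier_chr a S x
    rw [h1] at h3
    rw [← h2, ← h3, ← h1]
    simp only [Real.fourier_eq]
    have hI3 : Integrable fun ξ => 2 * 𝐞 (-(inner ℝ ξ x : ℝ)) • (chr a ξ * S ξ)
        - 𝐞 (-(inner ℝ ξ x : ℝ)) • (chr a ξ * (chr a ξ * S ξ)) :=
      ((fourier_integrable hI1 x).const_mul 2).sub (fourier_integrable hI2 x)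
    rw [← integral_const_mul, ← integral_sub ((fourier_integrable hI1 x).const_mul 2)
      (fourier_integrable hI2 x), ← integral_sub (fourier_integrable hI x) hI3]
    congr 1
    funext ξ
    simp only [Circle.smul_def, smul_eq_mul]
    ring
  rw [e1, e2]
  have v1 := hvan x hx 1 le_rfl
  have v2 := hvan x hx 2 one_le_two
  rw [one_smul] at v1
  rw [two_smul, ← sub_sub] at v2
  simp [v1, v2]

end solve

/-! ### The Poisson equation on star-shaped open sets -/

section poisson
variable {n : ℕ} {U K : Set (Sp n)} {f : Sp n → ℝ}

/-- Near a compact subset of `U`, the Poisson equation has a solution which is smooth on the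
whole space: multiply the datum by a cutoff. -/
lemma poisson_nhds (hn : 0 < n) (hU : IsOpen U) (hf : ContDiffOn ℝ (⊤ : ℕ∞) f U)
    (hK : IsCompact K) (hKU : K ⊆ U) :
    ∃ (u : Sp n → ℝ) (V : Set (Sp n)), ContDiff ℝ (⊤ : ℕ∞) u ∧ IsOpen V ∧ K ⊆ V ∧ V ⊆ U ∧
      ∀ x ∈ V, lap u x = f x := by
  obtain ⟨L, hL, hKL, hLU⟩ := exists_compact_between hK hU hKU
  obtain ⟨χ, hχ1, hχ0, -⟩ := exists_contMDiffMap_one_nhds_of_subset_interior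
    (modelWithCornersSelf ℝ (Sp n)) (n := (⊤ : ℕ∞)) hK.isClosed hKL
  have hχ : ContDiff ℝ (⊤ : ℕ∞) χ := χ.contMDiff.contDiff
  have hzero : ∀ x ∉ L, χ x * f x = 0 := fun x hx => by rw [hχ0 x hx, zero_mul]
  have hsm : ContDiff ℝ (⊤ : ℕ∞) fun x => χ x * f x := by
    rw [contDiff_iff_contDiffAt]
    intro x
    by_cases hx : x ∈ U
    · exact hχ.contDiffAt.mul (hf.contDiffAt (hU.mem_nhds hx))
    · have : (fun x => χ x * f x) =ᶠ[𝓝 x] fun _ => 0 := by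
        filter_upwards [hL.isClosed.isOpen_compl.mem_nhds fun h => hx (hLU h)] with y hy
          using hzero y hy
      exact contDiffAt_const.congr_of_eventuallyEq this
  have hcs : HasCompactSupport fun x => χ x * f x :=
    HasCompactSupport.intro hL hzero
  obtain ⟨R, hR⟩ := hK.isBounded.subset_ball 0
  obtain ⟨u, hu, hu'⟩ := poisson_ball hn hsm hcs R
  obtain ⟨W, hW, hKW, hWχ⟩ := mem_nhdsSet_iff_exists.1 hχ1
  refine ⟨u, W ∩ (ball 0 R ∩ U), hu, hW.inter (isOpen_ball.inter hU),
    subset_inter hKW (subset_inter hR hKU), fun x hx => hx.2.2, fun x hx => ?_⟩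
  have h1 : χ x = 1 := hWχ hx.1
  rw [hu' x hx.2.1, h1, one_mul]

/-- A star-shaped open set has an exhaustion by star-shaped compact sets. -/
lemma star_exhaustion (hU : IsOpen U) (hstar : ∀ x ∈ U, ∀ t ∈ Icc (0 : ℝ) 1, t • x ∈ U) :
    ∃ (K O : ℕ → Set (Sp n)), (∀ m, IsCompact (K m)) ∧ (∀ m, K m ⊆ U) ∧ Monotone K ∧
      (∀ m, ∀ x ∈ K m, ∀ t ∈ Icc (0 : ℝ) 1, t • x ∈ K m) ∧ (∀ m, IsOpen (O m)) ∧
      (∀ m, O m ⊆ K m) ∧ ∀ x ∈ U, ∃ m, x ∈ O m := by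
  have : LocallyCompactSpace U := hU.locallyCompactSpace
  let E : CompactExhaustion U := default
  refine ⟨fun m => (fun p : ℝ × Sp n => p.1 • p.2) '' (Icc 0 1 ×ˢ (Subtype.val '' E m)),
    fun m => Subtype.val '' interior (E m), fun m => ?_, fun m => ?_, fun m l hml => ?_,
    fun m => ?_, fun m => ?_, fun m => ?_, fun x hx => ?_⟩
  · exact (isCompact_Icc.prod ((E.isCompact m).image continuous_subtype_val)).image
      (by fun_prop)
  · rintro _ ⟨⟨t, _⟩, ⟨ht, y, -, rfl⟩, rfl⟩
    exact hstar y y.2 t ht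
  · exact image_mono (prod_mono_right (image_mono (E.subset hml)))
  · rintro _ ⟨⟨s, y⟩, ⟨hs, hy⟩, rfl⟩ t ht
    exact ⟨(t * s, y), ⟨⟨mul_nonneg ht.1 hs.1, mul_le_one₀ ht.2 hs.1 hs.2⟩, hy⟩, mul_smul _ _ _⟩
  · exact hU.isOpenMap_subtype_val _ isOpen_interior
  · intro x hx
    exact ⟨(1, x), ⟨by simp, image_mono interior_subset hx⟩, one_smul _ _⟩
  · obtain ⟨m, hm⟩ := E.exists_mem ⟨x, hx⟩
    exact ⟨m + 1, ⟨x, hx⟩, E.subset_interior_succ m hm, rfl⟩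

/-- The Poisson equation on a star-shaped open set is solvable for every smooth datum
(Mittag-Leffler procedure, based on the Runge approximation). -/
lemma poisson_star (hn : 0 < n) (hU : IsOpen U)
    (hstar : ∀ x ∈ U, ∀ t ∈ Icc (0 : ℝ) 1, t • x ∈ U) (hf : ContDiffOn ℝ (⊤ : ℕ∞) f U) :
    ∃ u : Sp n → ℝ, ContDiffOn ℝ (⊤ : ℕ∞) u U ∧ ∀ x ∈ U, lap u x = f x := by
  obtain ⟨K, O, hKc, hKU, hKm, hKs, hO, hOK, hcov⟩ := star_exhaustion hU hstar
  choose u V hu hV hKV hVU hlap using fun m => poisson_nhds hn hU hf (hKc m) (hKU m)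
  have hw : ∀ m, Harm (fun x => u (m + 1) x - u m x) (V (m + 1) ∩ V m) := by
    intro m
    have hVo := (hV (m + 1)).inter (hV m)
    refine ⟨((hu _).sub (hu m)).contDiffOn, fun x hx => ?_⟩
    have := lap_add hVo (hu (m + 1)).contDiffOn
      ((contDiff_const (c := (-1 : ℝ))).mul (hu m)).contDiffOn hx
    rw [lap_const_mul (-1) hVo (hu m).contDiffOn hx, hlap _ x hx.1, hlap _ x hx.2] at this
    simpa [sub_eq_add_neg] using this
  have hR : ∀ m, ∃ h, Harm h univ ∧ ∀ x ∈ K m, |(u (m + 1) x - u m x) - h x| ≤ (1 / 2) ^ m :=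
    fun m => runge hn (hKc m) (hKs m) ((hV (m + 1)).inter (hV m))
      (subset_inter ((hKm (Nat.le_succ m)).trans (hKV _)) (hKV m)) (hw m) _ (by positivity)
  choose h hh hh' using hR
  -- subtracting entire harmonic functions from the local solutions `u m` makes them converge
  set v : ℕ → Sp n → ℝ := fun m x => u m x + (-1) * ∑ j ∈ Finset.range m, h j x with hv
  have hsum : ∀ m, Harm (fun x => ∑ j ∈ Finset.range m, h j x) univ := fun m =>
    Harm.sum _ isOpen_univ fun j _ => hh j
  have hvs : ∀ m, ContDiff ℝ (⊤ : ℕ∞) (v m) := fun m =>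
    (hu m).add (contDiff_const.mul (contDiffOn_univ.1 (hsum m).1))
  have hvl : ∀ m, ∀ x ∈ V m, lap (v m) x = f x := by
    intro m x hx
    rw [hv, lap_add isOpen_univ (hu m).contDiffOn
      ((hsum m).const_mul (-1) isOpen_univ).1 (mem_univ x),
      ((hsum m).const_mul (-1) isOpen_univ).2 x (mem_univ x), hlap m x hx, add_zero]
  have hstep : ∀ M, ∀ x ∈ K M, ∀ m, dist (v (M + m) x) (v (M + (m + 1)) x) ≤ 1 * (1 / 2) ^ m := by
    intro M x hx m
    have h1 := hh' (M + m) x (hKm (Nat.le_add_right M m) hx)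
    rw [dist_comm, Real.dist_eq, one_mul, ← add_assoc]
    have e : v (M + m + 1) x - v (M + m) x
        = (u (M + m + 1) x - u (M + m) x) - h (M + m) x := by
      simp only [hv, Finset.sum_range_succ]; ring
    rw [e]
    exact h1.trans (pow_le_pow_of_le_one (by norm_num) (by norm_num) (Nat.le_add_left m M))
  set w : Sp n → ℝ := fun x => limUnder atTop fun m => v m x with hwdef
  have hlim : ∀ M, ∀ x ∈ K M, Tendsto (fun m => v (M + m) x) atTop (𝓝 (w x)) := by
    intro M x hx
    have hc : CauchySeq fun m => v (M + m) x :=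
      cauchySeq_of_le_geometric (1 / 2) 1 (by norm_num) (hstep M x hx)
    obtain ⟨l, hl⟩ := cauchySeq_tendsto_of_complete hc
    have hl' : Tendsto (fun m => v m x) atTop (𝓝 l) := by
      rw [← tendsto_add_atTop_iff_nat M]; simpa only [add_comm] using hl
    rw [hwdef]; simp only; rw [hl'.limUnder_eq]; exact hl
  have hH : ∀ M, Harm (fun x => w x - v M x) (O M) := by
    intro M
    refine harm_limit hn (hO M) (u := fun m x => v (M + m) x - v M x) (fun m => ?_)
      (TendstoUniformlyOn.tendstoLocallyUniformlyOn ?_)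
    · refine ⟨((hvs _).sub (hvs M)).contDiffOn, fun x hx => ?_⟩
      have hx1 := hOK M hx
      have := lap_add isOpen_univ (hvs (M + m)).contDiffOn
        ((contDiff_const (c := (-1 : ℝ))).mul (hvs M)).contDiffOn (mem_univ x)
      rw [lap_const_mul (-1) isOpen_univ (hvs M).contDiffOn (mem_univ x),
        hvl _ x (hKV _ (hKm (Nat.le_add_right M m) hx1)), hvl _ x (hKV _ hx1)] at this
      simpa [sub_eq_add_neg] using this
    · rw [Metric.tendstoUniformlyOn_iff]
      intro ε hε
      have ht : Tendsto (fun m : ℕ => 1 * (1 / 2 : ℝ) ^ m / (1 - 1 / 2)) atTop (𝓝 0) := by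
        have := ((tendsto_pow_atTop_nhds_zero_of_lt_one (r := (1 / 2 : ℝ)) (by norm_num)
          (by norm_num)).const_mul 1).div_const (1 - 1 / 2)
        simpa using this
      filter_upwards [ht.eventually (gt_mem_nhds hε)] with m hm x hx
      have h1 := dist_le_of_le_geometric_of_tendsto (1 / 2) 1 (by norm_num)
        (hstep M x (hOK M hx)) (hlim M x (hOK M hx)) m
      rw [dist_sub_right, dist_comm]
      exact h1.trans_lt hm
  have hwv : ∀ M, ∀ x ∈ O M, w x = (w x - v M x) + v M x := fun M x _ => by ring
  refine ⟨w, fun x hx => ?_, fun x hx => ?_⟩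
  · obtain ⟨M, hM⟩ := hcov x hx
    have := ((hH M).1.add (hvs M).contDiffOn).congr (hwv M)
    exact (this.contDiffAt ((hO M).mem_nhds hM)).contDiffWithinAt
  · obtain ⟨M, hM⟩ := hcov x hx
    rw [lap_congr (hO M) (hwv M) hM, lap_add (hO M) (hH M).1 (hvs M).contDiffOn hM,
      (hH M).2 x hM, hvl M x (hKV M (hOK M hM)), zero_add]

end poisson

/-! ### Weighted means along rays -/

section homotopy
variable {n : ℕ} {U : Set (Sp n)} {E : Type*} [NormedAddCommGroup E] [NormedSpace ℝ E]

/-- The weighted mean `∫₀¹ t ^ k f (t x) dt` along rays from the origin. -/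
noncomputable def ray (k : ℕ) (f : Sp n → E) (x : Sp n) : E :=
  ∫ t in (0 : ℝ)..1, t ^ k • f (t • x)

lemma ray_cont (hstar : ∀ x ∈ U, ∀ t ∈ Icc (0 : ℝ) 1, t • x ∈ U)
    (k : ℕ) {f : Sp n → E} (hf : ContDiffOn ℝ (⊤ : ℕ∞) f U) {x : Sp n} (hx : x ∈ U) :
    ContinuousOn (fun t : ℝ => t ^ k • f (t • x)) (Icc 0 1) :=
  (by fun_prop : ContinuousOn (fun t : ℝ => t ^ k) (Icc 0 1)).smul
    (hf.continuousOn.comp (by fun_prop) fun t ht => hstar x hx t ht)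

lemma ray_meas (hstar : ∀ x ∈ U, ∀ t ∈ Icc (0 : ℝ) 1, t • x ∈ U)
    (k : ℕ) {f : Sp n → E} (hf : ContDiffOn ℝ (⊤ : ℕ∞) f U) {x : Sp n} (hx : x ∈ U) :
    MeasureTheory.AEStronglyMeasurable
      (fun t : ℝ => t ^ k • f (t • x)) (MeasureTheory.volume.restrict (uIoc (0 : ℝ) 1)) := by
  rw [uIoc_of_le zero_le_one]
  exact ((ray_cont hstar k hf hx).mono Ioc_subset_Icc_self).aestronglyMeasurable
    measurableSet_Ioc

lemma ray_hasFDerivAt (hU : IsOpen U) (hstar : ∀ x ∈ U, ∀ t ∈ Icc (0 : ℝ) 1, t • x ∈ U)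
    (k : ℕ) {f : Sp n → E} (hf : ContDiffOn ℝ (⊤ : ℕ∞) f U) {x : Sp n} (hx : x ∈ U) :
    HasFDerivAt (ray k f) (ray (k + 1) (fderiv ℝ f) x) x := by
  have hf' : ContDiffOn ℝ (⊤ : ℕ∞) (fderiv ℝ f) U := hf.fderiv_of_isOpen hU (by simp)
  obtain ⟨r, hr, hrU⟩ := nhds_basis_closedBall.mem_iff.1 (hU.mem_nhds hx)
  set L : Set (Sp n) := (fun p : ℝ × Sp n => p.1 • p.2) '' (Icc 0 1 ×ˢ closedBall x r)
  have hL : IsCompact L := (isCompact_Icc.prod (isCompact_closedBall x r)).image (by fun_prop)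
  have hLU : L ⊆ U := by
    rintro _ ⟨⟨t, y⟩, ⟨ht, hy⟩, rfl⟩
    exact hstar y (hrU hy) t ht
  obtain ⟨C, hC⟩ := hL.exists_bound_of_continuousOn (hf'.continuousOn.mono hLU)
  have hsub : uIoc (0 : ℝ) 1 ⊆ Icc 0 1 := by
    rw [uIoc_of_le zero_le_one]; exact Ioc_subset_Icc_self
  refine (intervalIntegral.hasFDerivAt_integral_of_dominated_of_fderiv_le
    (μ := MeasureTheory.volume) (s := closedBall x r) (bound := fun _ => C)
    (F := fun y (t : ℝ) => t ^ k • f (t • y))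
    (F' := fun y (t : ℝ) => t ^ (k + 1) • fderiv ℝ f (t • y)) (closedBall_mem_nhds x hr)
    ?_ ?_ ?_ ?_ ?_ ?_)
  · filter_upwards [hU.mem_nhds hx] with y hy using ray_meas hstar k hf hy
  · exact ContinuousOn.intervalIntegrable_of_Icc zero_le_one (ray_cont hstar k hf hx)
  · exact ray_meas hstar (k + 1) hf' hx
  · refine MeasureTheory.ae_of_all _ fun t ht y hy => ?_
    have ht' := hsub ht
    rw [norm_smul]
    have h1 : ‖t ^ (k + 1)‖ ≤ 1 := by
      rw [norm_pow, Real.norm_of_nonneg ht'.1]; exact pow_le_one₀ ht'.1 ht'.2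
    have h2 := hC (t • y) ⟨(t, y), ⟨ht', hy⟩, rfl⟩
    nlinarith [norm_nonneg (fderiv ℝ f (t • y)), norm_nonneg (t ^ (k + 1))]
  · exact intervalIntegrable_const
  · refine MeasureTheory.ae_of_all _ fun t ht y hy => ?_
    have hty : t • y ∈ U := hstar y (hrU hy) t (hsub ht)
    have h1 : HasFDerivAt f (fderiv ℝ f (t • y)) (t • y) :=
      ((hf.contDiffAt (hU.mem_nhds hty)).differentiableAt (by simp)).hasFDerivAt
    have h2 : HasFDerivAt (fun y : Sp n => t • y) (t • ContinuousLinearMap.id ℝ (Sp n)) y :=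
      (hasFDerivAt_id y).const_smul t
    have h3 := (h1.comp y h2).const_smul (t ^ k)
    have e : t ^ k • (fderiv ℝ f (t • y)).comp (t • ContinuousLinearMap.id ℝ (Sp n))
        = t ^ (k + 1) • fderiv ℝ f (t • y) := by
      ext v; simp [pow_succ, smul_smul]
    rw [e] at h3
    exact h3

lemma ray_smooth (hU : IsOpen U) (hstar : ∀ x ∈ U, ∀ t ∈ Icc (0 : ℝ) 1, t • x ∈ U)
    (k : ℕ) {f : Sp n → E} (hf : ContDiffOn ℝ (⊤ : ℕ∞) f U) :
    ContDiffOn ℝ (⊤ : ℕ∞) (ray k f) U := by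
  rw [contDiffOn_infty]
  intro N
  induction N generalizing E k with
  | zero => exact contDiffOn_zero.2 (fun x hx =>
      (ray_hasFDerivAt hU hstar k hf hx).continuousAt.continuousWithinAt)
  | succ N ih =>
    push_cast
    rw [contDiffOn_succ_iff_fderiv_of_isOpen hU]
    refine ⟨fun x hx =>
      (ray_hasFDerivAt hU hstar k hf hx).differentiableAt.differentiableWithinAt,
      by simp, ?_⟩
    exact (ih (k + 1) (hf.fderiv_of_isOpen hU (by simp))).congr fun x hx =>
      (ray_hasFDerivAt hU hstar k hf hx).fderiv

lemma pd_ray (hU : IsOpen U) (hstar : ∀ x ∈ U, ∀ t ∈ Icc (0 : ℝ) 1, t • x ∈ U)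
    (k : ℕ) {f : Sp n → ℝ} (hf : ContDiffOn ℝ (⊤ : ℕ∞) f U) {x : Sp n} (hx : x ∈ U) (v : Sp n) :
    pd (ray k f) v x = ray (k + 1) (pd f v) x := by
  rw [pd, (ray_hasFDerivAt hU hstar k hf hx).fderiv, ray,
    ContinuousLinearMap.intervalIntegral_apply]
  · rfl
  · exact ContinuousOn.intervalIntegrable_of_Icc zero_le_one
      (ray_cont hstar (k + 1) (hf.fderiv_of_isOpen hU (by simp)) hx)

/-- Euler's identity for the weighted means along rays. -/
lemma ray_euler (hU : IsOpen U) (hstar : ∀ x ∈ U, ∀ t ∈ Icc (0 : ℝ) 1, t • x ∈ U)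
    (k : ℕ) {f : Sp n → ℝ} (hf : ContDiffOn ℝ (⊤ : ℕ∞) f U) {x : Sp n} (hx : x ∈ U) :
    ∑ j, x j * pd (ray k f) (ee j) x + (k + 1) * ray k f x = f x := by
  rw [← fderiv_eq_sum, pd_ray hU hstar k hf hx, ray, ray,
    ← intervalIntegral.integral_const_mul, ← intervalIntegral.integral_add]
  · have h : ∀ t ∈ uIcc (0 : ℝ) 1, HasDerivAt (fun t : ℝ => t ^ (k + 1) * f (t • x))
        (t ^ (k + 1) • pd f x (t • x) + (k + 1) * t ^ k • f (t • x)) t := by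
      intro t ht
      rw [uIcc_of_le zero_le_one] at ht
      have h1 : HasDerivAt (fun t : ℝ => f (t • x)) (pd f x (t • x)) t := by
        simpa using hasDerivAt_line (x := 0) hU hf x t (by simpa using hstar x hx t ht)
      refine ((hasDerivAt_pow (k + 1) t).fun_mul h1).congr_deriv ?_
      simp only [smul_eq_mul, Nat.add_sub_cancel]; push_cast; ring
    rw [intervalIntegral.integral_eq_sub_of_hasDerivAt h]
    · simp
    · exact (ContinuousOn.intervalIntegrable_of_Icc zero_le_one
        (ray_cont hstar (k + 1) (pd_smooth hU hf x) hx)).add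
        ((ContinuousOn.intervalIntegrable_of_Icc zero_le_one
          (ray_cont hstar k hf hx)).const_mul _)
  · exact ContinuousOn.intervalIntegrable_of_Icc zero_le_one
      (ray_cont hstar (k + 1) (pd_smooth hU hf x) hx)
  · exact (ContinuousOn.intervalIntegrable_of_Icc zero_le_one
      (ray_cont hstar k hf hx)).const_mul _

end homotopy

/-! ### Antisymmetric tensors -/

section alternating
variable {n k : ℕ}

/-- `T` changes by the sign of the permutation when its indices are permuted. -/
def Anti (T : (Fin k → Fin n) → ℝ) : Prop :=
  ∀ (i : Fin k → Fin n) (σ : Equiv.Perm (Fin k)),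
    T (i ∘ σ) = ((Equiv.Perm.sign σ : ℤ) : ℝ) * T i

/-- The index tuple `(a, i₀, i₁, …)`. -/
abbrev cn (a : Fin n) (i : Fin k → Fin n) : Fin (k + 1) → Fin n := Fin.cons a i

lemma exists_cn (j : Fin (k + 1) → Fin n) : ∃ a i, j = cn a i :=
  ⟨j 0, Fin.tail j, (Fin.cons_self_tail j).symm⟩

lemma Anti.cn {T : (Fin (k + 1) → Fin n) → ℝ} (h : Anti T) (a : Fin n) :
    Anti fun i => T (cn a i) := by
  intro i σ
  have e : _root_.cn a (i ∘ σ) = _root_.cn a i ∘ (Equiv.Perm.decomposeFin.symm (0, σ)) := by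
    funext x
    refine Fin.cases ?_ (fun x => ?_) x
    · simp
    · simp
  change T _ = _ * T _
  rw [e, h, Equiv.Perm.decomposeFin.symm_sign]
  simp

lemma Anti.swap {T : (Fin (k + 2) → Fin n) → ℝ} (h : Anti T) (a b : Fin n) (t : Fin k → Fin n) :
    T (_root_.cn a (_root_.cn b t)) = -T (_root_.cn b (_root_.cn a t)) := by
  have e : _root_.cn a (_root_.cn b t) = _root_.cn b (_root_.cn a t) ∘ Equiv.swap 0 1 := by
    funext x
    refine Fin.cases ?_ (fun x => Fin.cases ?_ (fun x => ?_) x) x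
    · simp
    · simp
    · rw [Function.comp_apply, Equiv.swap_apply_of_ne_of_ne (Fin.succ_ne_zero _)
        (by rw [← Fin.succ_zero_eq_one]; exact fun h => Fin.succ_ne_zero _ (Fin.succ_injective _ h))]
      simp
  rw [e, h, Equiv.Perm.sign_swap (by simp)]
  simp

lemma anti_zero (T : (Fin 0 → Fin n) → ℝ) : Anti T := by
  intro i σ
  rw [Subsingleton.elim σ 1]; simp

lemma anti_one (T : (Fin 1 → Fin n) → ℝ) : Anti T := by
  intro i σ
  rw [Subsingleton.elim σ 1]; simp

/-- Since adjacent transpositions generate the symmetric group, antisymmetry can be checked on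
the tail of the index tuple and on its first two entries. -/
lemma anti_of {T : (Fin (k + 2) → Fin n) → ℝ} (h1 : ∀ a, Anti fun i => T (cn a i))
    (h2 : ∀ a b (t : Fin k → Fin n), T (cn a (cn b t)) = -T (cn b (cn a t))) : Anti T := by
  have key : ∀ σ : Equiv.Perm (Fin (k + 2)), ∀ i : Fin (k + 2) → Fin n,
      T (i ∘ σ) = ((Equiv.Perm.sign σ : ℤ) : ℝ) * T i := by
    intro σ
    have hσ : σ ∈ Submonoid.closure
        (Set.range fun i : Fin (k + 1) => Equiv.swap i.castSucc i.succ) := by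
      rw [Equiv.Perm.mclosure_swap_castSucc_succ]; trivial
    induction hσ using Submonoid.closure_induction with
    | one => intro i; simp
    | mul σ τ _ _ hσ hτ =>
      intro i
      have e : i ∘ (σ * τ : Equiv.Perm (Fin (k + 2))) = (i ∘ σ) ∘ τ := rfl
      rw [e, hτ, hσ, Equiv.Perm.sign_mul]; push_cast; ring
    | mem σ hσ =>
      obtain ⟨l, rfl⟩ := hσ
      intro i
      simp only
      rw [Equiv.Perm.sign_swap (Fin.castSucc_lt_succ).ne]
      obtain ⟨a, i, rfl⟩ := exists_cn i
      refine Fin.cases ?_ (fun l => ?_) l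
      · obtain ⟨b, t, rfl⟩ := exists_cn i
        have e : cn a (cn b t) ∘ Equiv.swap (Fin.castSucc (0 : Fin (k + 1))) (Fin.succ 0)
            = cn b (cn a t) := by
          funext x
          refine Fin.cases ?_ (fun x => Fin.cases ?_ (fun x => ?_) x) x
          · simp
          · simp
          · rw [Function.comp_apply, Fin.castSucc_zero,
              Equiv.swap_apply_of_ne_of_ne (Fin.succ_ne_zero _)
                (fun h => Fin.succ_ne_zero _ (Fin.succ_injective _ h))]
            simp
        rw [e, h2]; simp
      · have e : cn a i ∘ Equiv.swap l.succ.castSucc l.succ.succ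
            = cn a (i ∘ Equiv.swap l.castSucc l.succ) := by
          funext x
          rw [← Fin.succ_castSucc]
          refine Fin.cases ?_ (fun x => ?_) x
          · rw [Function.comp_apply, Equiv.swap_apply_of_ne_of_ne (Fin.succ_ne_zero _).symm
              (Fin.succ_ne_zero _).symm]
            simp
          · rw [Function.comp_apply, ← (Fin.succ_injective _).map_swap]
            simp
        rw [e]
        have := h1 a i (Equiv.swap l.castSucc l.succ)
        simp only at this
        rw [this, Equiv.Perm.sign_swap (Fin.castSucc_lt_succ).ne]
  exact fun i σ => key σ i

/-- Moving the `l`-th index to the front costs the sign `(-1) ^ l`. -/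
lemma Anti.front {T : (Fin (k + 1) → Fin n) → ℝ} (h : Anti T) (i : Fin (k + 1) → Fin n)
    (l : Fin (k + 1)) : T (_root_.cn (i l) (i ∘ l.succAbove)) = (-1) ^ (l : ℕ) * T i := by
  have e : _root_.cn (i l) (i ∘ l.succAbove) = i ∘ l.cycleRange.symm := by
    funext x
    refine Fin.cases ?_ (fun x => ?_) x
    · simp
    · simp
  rw [e, h, Equiv.Perm.sign_symm, Fin.sign_cycleRange]
  simp

/-- Antisymmetrization of a tensor. -/
noncomputable def asym (T : (Fin k → Fin n) → ℝ) (i : Fin k → Fin n) : ℝ :=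
  ∑ σ : Equiv.Perm (Fin k), (1 / k.factorial * ((Equiv.Perm.sign σ : ℤ) : ℝ)) * T (i ∘ σ)

lemma perm_sign_sq (σ : Equiv.Perm (Fin k)) :
    ((Equiv.Perm.sign σ : ℤ) : ℝ) * ((Equiv.Perm.sign σ : ℤ) : ℝ) = 1 := by
  rcases Int.units_eq_one_or (Equiv.Perm.sign σ) with h | h <;> simp [h]

lemma anti_asym (T : (Fin k → Fin n) → ℝ) : Anti (asym T) := by
  intro i τ
  unfold asym
  rw [← Equiv.sum_comp (Equiv.mulLeft τ) fun σ : Equiv.Perm (Fin k) =>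
    (1 / k.factorial * ((Equiv.Perm.sign σ : ℤ) : ℝ)) * T (i ∘ σ), Finset.mul_sum]
  refine Finset.sum_congr rfl fun σ _ => ?_
  have e : i ∘ (τ * σ : Equiv.Perm (Fin k)) = i ∘ τ ∘ σ := rfl
  simp only [Equiv.coe_mulLeft, e, Equiv.Perm.sign_mul, Function.comp_assoc]
  push_cast
  linear_combination -(1 / (k.factorial : ℝ) * ((Equiv.Perm.sign σ : ℤ) : ℝ) *
    T (i ∘ τ ∘ σ)) * perm_sign_sq τ

lemma asym_of_anti {T : (Fin k → Fin n) → ℝ} (h : Anti T) (i : Fin k → Fin n) :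
    asym T i = T i := by
  unfold asym
  have : ∀ σ : Equiv.Perm (Fin k), (1 / k.factorial * ((Equiv.Perm.sign σ : ℤ) : ℝ)) * T (i ∘ σ)
      = 1 / k.factorial * T i := by
    intro σ
    rw [h]
    linear_combination (1 / (k.factorial : ℝ) * T i) * perm_sign_sq σ
  simp only [this, Finset.sum_const, Finset.card_univ, Fintype.card_perm, Fintype.card_fin,
    nsmul_eq_mul]
  field_simp

end alternating

/-! ### Exterior derivative, divergence and contraction -/

section tensor
variable {n p : ℕ} {U : Set (Sp n)} {x : Sp n}

/-- All components of the tensor field `T` are smooth on `U`. -/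
def SmT (T : Sp n → (Fin p → Fin n) → ℝ) (U : Set (Sp n)) : Prop :=
  ∀ i, ContDiffOn ℝ (⊤ : ℕ∞) (fun x => T x i) U

/-- Interior product of a tensor field with the `a`-th basis vector: the first index is `a`. -/
def ins (a : Fin n) (T : Sp n → (Fin (p + 1) → Fin n) → ℝ) : Sp n → (Fin p → Fin n) → ℝ :=
  fun x i => T x (cn a i)

/-- Componentwise directional derivative. -/
noncomputable def pdT (v : Sp n) (T : Sp n → (Fin p → Fin n) → ℝ) : Sp n → (Fin p → Fin n) → ℝ :=
  fun x i => pd (fun y => T y i) v x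

lemma SmT.ins {T : Sp n → (Fin (p + 1) → Fin n) → ℝ} (h : SmT T U) (a : Fin n) :
    SmT (ins a T) U := fun i => h (cn a i)

lemma SmT.pdT (hU : IsOpen U) {T : Sp n → (Fin p → Fin n) → ℝ} (h : SmT T U) (v : Sp n) :
    SmT (pdT v T) U := fun i => pd_smooth hU (h i) v

lemma SmT.ext (hU : IsOpen U) {T : Sp n → (Fin p → Fin n) → ℝ} (h : SmT T U) :
    SmT (extDer n p T) U := fun _ =>
  ContDiffOn.sum fun _ _ => contDiffOn_const.mul (pd_smooth hU (h _) _)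

lemma SmT.divg (hU : IsOpen U) {T : Sp n → (Fin (p + 1) → Fin n) → ℝ} (h : SmT T U) :
    SmT (divg n p T) U := fun _ =>
  ContDiffOn.sum fun _ _ => pd_smooth hU (h _) _

lemma ext_cons_zero (T : Sp n → (Fin 0 → Fin n) → ℝ) (a : Fin n) (i : Fin 0 → Fin n) :
    extDer n 0 T x (cn a i) = pdT (ee a) T x i := by
  simp [extDer, pdT, ee]

/-- Cartan's formula for the derivative along a basis vector, `ι_a d = ∂_a - d ι_a`, which
characterizes `d` by recursion on the degree. -/
lemma ext_cons (T : Sp n → (Fin (p + 1) → Fin n) → ℝ) (a : Fin n) (i : Fin (p + 1) → Fin n) :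
    extDer n (p + 1) T x (cn a i) = pdT (ee a) T x i - extDer n p (ins a T) x i := by
  have h0 : cn a i ∘ Fin.succAbove 0 = i := by
    funext l; simp
  have hs : ∀ l : Fin (p + 1), cn a i ∘ l.succ.succAbove = cn a (i ∘ l.succAbove) := by
    intro l
    funext q
    refine Fin.cases ?_ (fun q => ?_) q <;> simp
  unfold extDer
  rw [Fin.sum_univ_succ]
  simp only [h0, hs, Fin.cons_zero, Fin.cons_succ, Fin.val_succ, Fin.val_zero, pow_succ, pow_zero,
    one_mul, pdT, ins, mul_neg, mul_one, neg_mul, Finset.sum_neg_distrib, sub_eq_add_neg]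

lemma ext_congr (hU : IsOpen U) {S T : Sp n → (Fin p → Fin n) → ℝ}
    (h : ∀ y ∈ U, ∀ i, S y i = T y i) (hx : x ∈ U) (i : Fin (p + 1) → Fin n) :
    extDer n p S x i = extDer n p T x i :=
  Finset.sum_congr rfl fun _ _ => by rw [pd_congr hU (fun y hy => h y hy _) _ hx]

lemma divg_congr (hU : IsOpen U) {S T : Sp n → (Fin (p + 1) → Fin n) → ℝ}
    (h : ∀ y ∈ U, ∀ i, S y i = T y i) (hx : x ∈ U) (i : Fin p → Fin n) :
    divg n p S x i = divg n p T x i :=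
  Finset.sum_congr rfl fun _ _ => pd_congr hU (fun y hy => h y hy _) _ hx

lemma ext_sub (hU : IsOpen U) {S T : Sp n → (Fin p → Fin n) → ℝ} (hS : SmT S U) (hT : SmT T U)
    (hx : x ∈ U) (i : Fin (p + 1) → Fin n) :
    extDer n p (fun y i => S y i - T y i) x i = extDer n p S x i - extDer n p T x i := by
  unfold extDer
  rw [← Finset.sum_sub_distrib]
  refine Finset.sum_congr rfl fun l _ => ?_
  rw [pd_sub ((hS _).diffAt hU hx) ((hT _).diffAt hU hx), mul_sub]

lemma ext_sum (hU : IsOpen U) {ι : Type*} (s : Finset ι) {S : ι → Sp n → (Fin p → Fin n) → ℝ}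
    (hS : ∀ j, SmT (S j) U) (hx : x ∈ U) (i : Fin (p + 1) → Fin n) :
    extDer n p (fun y i => ∑ j ∈ s, S j y i) x i = ∑ j ∈ s, extDer n p (S j) x i := by
  unfold extDer
  rw [Finset.sum_comm]
  refine Finset.sum_congr rfl fun l _ => ?_
  rw [pd_sum _ (fun j _ => (hS j _).diffAt hU hx), Finset.mul_sum]

/-- Partial derivatives commute with the exterior derivative. -/
lemma pd_ext (hU : IsOpen U) {T : Sp n → (Fin p → Fin n) → ℝ} (hT : SmT T U) (hx : x ∈ U)
    (v : Sp n) (i : Fin (p + 1) → Fin n) :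
    pdT v (extDer n p T) x i = extDer n p (pdT v T) x i := by
  have hs : ∀ j w, ContDiffOn ℝ (⊤ : ℕ∞) (pd (fun y => T y j) w) U :=
    fun j w => pd_smooth hU (hT j) w
  simp only [pdT, extDer]
  rw [pd_sum _ fun l _ => ((hs _ _).diffAt hU hx).const_mul _]
  refine Finset.sum_congr rfl fun l _ => ?_
  rw [pd_const_mul _ ((hs _ _).diffAt hU hx)]
  congr 1
  exact pd_comm hU (hT _) hx _ _

lemma ext_ext (hU : IsOpen U) {T : Sp n → (Fin p → Fin n) → ℝ} (hT : SmT T U) (hx : x ∈ U)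
    (i : Fin (p + 2) → Fin n) : extDer n (p + 1) (extDer n p T) x i = 0 := by
  induction p with
  | zero =>
    obtain ⟨a, i, rfl⟩ := exists_cn i
    rw [ext_cons, pd_ext hU hT hx, ext_congr hU (S := ins a (extDer n 0 T)) (T := pdT (ee a) T)
      (fun y _ i => ext_cons_zero T a i) hx, sub_self]
  | succ p ih =>
    obtain ⟨a, i, rfl⟩ := exists_cn i
    rw [ext_cons, pd_ext hU hT hx, ext_congr hU (S := ins a (extDer n (p + 1) T))
      (T := fun y i => pdT (ee a) T y i - extDer n p (ins a T) y i)
      (fun y _ i => ext_cons T a i) hx, ext_sub hU (hT.pdT hU _) ((hT.ins a).ext hU) hx,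
      ih (hT.ins a)]
    ring

lemma weitzenbock_zero (T : Sp n → (Fin 0 → Fin n) → ℝ) (i : Fin 0 → Fin n) :
    divg n 0 (extDer n 0 T) x i = lap (fun y => T y i) x := by
  refine Finset.sum_congr rfl fun j _ => ?_
  congr 1
  funext y
  exact ext_cons_zero T j i

/-- The Weitzenböck formula `δd + dδ = Δ` in flat space. -/
lemma weitzenbock (hU : IsOpen U) {T : Sp n → (Fin (p + 1) → Fin n) → ℝ} (hT : SmT T U)
    (hx : x ∈ U) (i : Fin (p + 1) → Fin n) :
    divg n (p + 1) (extDer n (p + 1) T) x i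
      = lap (fun y => T y i) x - extDer n p (divg n p T) x i := by
  have h1 : extDer n p (divg n p T) x i = ∑ j, extDer n p (pdT (ee j) (ins j T)) x i :=
    ext_sum hU Finset.univ (S := fun j => pdT (ee j) (ins j T))
      (fun j => (hT.ins j).pdT hU _) hx i
  rw [h1, lap, ← Finset.sum_sub_distrib]
  refine Finset.sum_congr rfl fun j _ => ?_
  rw [← pd_ext hU (hT.ins j) hx, pdT,
    ← pd_sub ((pd_smooth hU (hT _) _).diffAt hU hx) (((hT.ins j).ext hU _).diffAt hU hx)]
  congr 1
  funext y
  exact ext_cons T j i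

lemma anti_pdT (hU : IsOpen U) {T : Sp n → (Fin p → Fin n) → ℝ} (hT : SmT T U)
    (h : ∀ y ∈ U, Anti (T y)) (hx : x ∈ U) (v : Sp n) : Anti (pdT v T x) := fun i σ => by
  rw [pdT, pd_congr hU (fun y hy => h y hy i σ) v hx, pd_const_mul _ ((hT _).diffAt hU hx)]
  rfl

lemma Anti.sub {S T : (Fin p → Fin n) → ℝ} (hS : Anti S) (hT : Anti T) :
    Anti fun i => S i - T i := fun i σ => by
  simp only [hS i σ, hT i σ]; ring

lemma Anti.sum {ι : Type*} (s : Finset ι) {S : ι → (Fin p → Fin n) → ℝ}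
    (hS : ∀ j, Anti (S j)) : Anti fun i => ∑ j ∈ s, S j i := fun i σ => by
  simp only [Finset.mul_sum]
  exact Finset.sum_congr rfl fun j _ => hS j i σ

lemma anti_divg (hU : IsOpen U) {T : Sp n → (Fin (p + 1) → Fin n) → ℝ} (hT : SmT T U)
    (h : ∀ y ∈ U, Anti (T y)) (hx : x ∈ U) : Anti (divg n p T x) :=
  Anti.sum Finset.univ (S := fun j => pdT (ee j) (ins j T) x) fun j =>
    anti_pdT hU (hT.ins j) (fun y hy => (h y hy).cn j) hx _

lemma anti_ext (hU : IsOpen U) {T : Sp n → (Fin p → Fin n) → ℝ} (hT : SmT T U)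
    (h : ∀ y ∈ U, Anti (T y)) (hx : x ∈ U) : Anti (extDer n p T x) := by
  induction p with
  | zero => exact anti_one _
  | succ p ih =>
    refine anti_of (fun a => ?_) fun a b t => ?_
    · simp only [ext_cons]
      exact (anti_pdT hU hT h hx _).sub (ih (hT.ins a) fun y hy => (h y hy).cn a)
    · cases p with
      | zero =>
        rw [ext_cons, ext_cons, ext_cons_zero, ext_cons_zero]
        simp only [pdT, ins]
        ring
      | succ p =>
        rw [ext_cons, ext_cons, ext_cons, ext_cons]
        have hsw : extDer n p (ins b (ins a T)) x t = - extDer n p (ins a (ins b T)) x t := by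
          have e := ext_sub hU (S := fun _ _ => 0) (T := ins a (ins b T))
            (fun _ => contDiffOn_const) ((hT.ins b).ins a) hx t
          have e0 : extDer n p (fun _ _ => 0) x t = 0 := by simp [extDer, pd_const]
          rw [e0, zero_sub] at e
          rw [← e]
          exact ext_congr hU (fun y hy i => by simpa [ins] using (h y hy).swap a b i) hx t
        rw [hsw]
        simp only [pdT, ins]
        ring

/-- `δδ = 0` on antisymmetric fields. -/
lemma divg_divg (hU : IsOpen U) {T : Sp n → (Fin (p + 2) → Fin n) → ℝ} (hT : SmT T U)
    (h : ∀ y ∈ U, Anti (T y)) (hx : x ∈ U) (i : Fin p → Fin n) :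
    divg n p (divg n (p + 1) T) x i = 0 := by
  have e : divg n p (divg n (p + 1) T) x i
      = ∑ a, ∑ b, pd (pd (fun y => T y (cn b (cn a i))) (ee b)) (ee a) x := by
    refine Finset.sum_congr rfl fun a _ => ?_
    exact pd_sum _ (fun b _ => (pd_smooth hU (hT _) _).diffAt hU hx) _
  have e2 : divg n p (divg n (p + 1) T) x i = -divg n p (divg n (p + 1) T) x i := by
    conv_lhs => rw [e, Finset.sum_comm]
    rw [e, ← Finset.sum_neg_distrib]
    refine Finset.sum_congr rfl fun b _ => ?_
    rw [← Finset.sum_neg_distrib]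
    refine Finset.sum_congr rfl fun a _ => ?_
    have hd := pd_smooth hU (hT (cn a (cn b i)))
    rw [pd_comm hU (hT _) hx, pd_congr hU (g := fun y => -1 * pd (fun y => T y (cn a (cn b i)))
      (ee a) y), pd_const_mul _ ((hd _).diffAt hU hx), neg_one_mul]
    · intro y hy
      rw [← pd_const_mul _ ((hT _).diffAt hU hy)]
      exact pd_congr hU (fun z hz => by rw [(h z hz).swap b a i, neg_one_mul]) _ hy
    · exact hx
  linarith

/-- Contraction with the Euler vector field `x ↦ x`. -/
noncomputable def contr (T : Sp n → (Fin (p + 1) → Fin n) → ℝ) : Sp n → (Fin p → Fin n) → ℝ :=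
  fun x i => ∑ j, x j * T x (cn j i)

lemma coord_smooth (j : Fin n) : ContDiffOn ℝ (⊤ : ℕ∞) (fun x : Sp n => x j) U :=
  (EuclideanSpace.proj j : Sp n →L[ℝ] ℝ).contDiff.contDiffOn

lemma SmT.contr {T : Sp n → (Fin (p + 1) → Fin n) → ℝ} (h : SmT T U) : SmT (contr T) U :=
  fun _ => ContDiffOn.sum fun j _ => (coord_smooth j).mul (h _)

lemma anti_contr {T : Sp n → (Fin (p + 1) → Fin n) → ℝ} (h : Anti (T x)) : Anti (contr T x) :=
  Anti.sum Finset.univ (S := fun j i => x j * T x (cn j i)) fun j i σ => by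
    have := h.cn j i σ
    simp only at this ⊢
    rw [this]; ring

/-- Cartan's formula `d ι_X = L_X - ι_X d` for the Euler field `X`; the term `(p + 1) T` is the
part of `L_X` that differentiates the coefficients of `X`. -/
lemma ext_contr (hU : IsOpen U) {T : Sp n → (Fin (p + 1) → Fin n) → ℝ} (hT : SmT T U)
    (h : Anti (T x)) (hx : x ∈ U) (i : Fin (p + 1) → Fin n) :
    extDer n p (contr T) x i = (p + 1) * T x i
      + ∑ j, x j * (pdT (ee j) T x i - extDer n (p + 1) T x (cn j i)) := by
  have e : ∀ l : Fin (p + 1), (-1 : ℝ) ^ (l : ℕ) *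
      pd (fun y => contr T y (i ∘ l.succAbove)) (ee (i l)) x
      = T x i + ∑ j, x j * ((-1 : ℝ) ^ (l : ℕ) *
        pd (fun y => ins j T y (i ∘ l.succAbove)) (ee (i l)) x) := by
    intro l
    have hd : ∀ j, DifferentiableAt ℝ (fun y => T y (cn j (i ∘ l.succAbove))) x :=
      fun j => (hT _).diffAt hU hx
    have hc : ∀ j : Fin n, DifferentiableAt ℝ (fun y : Sp n => y j) x :=
      fun j => (coord_smooth (U := univ) j).diffAt isOpen_univ trivial
    have e1 : pd (fun y => contr T y (i ∘ l.succAbove)) (ee (i l)) x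
        = ∑ j, (x j * pd (fun y => ins j T y (i ∘ l.succAbove)) (ee (i l)) x
          + T x (cn j (i ∘ l.succAbove)) * (ee (i l) : Sp n) j) := by
      refine (pd_sum _ (fun j _ => (hc j).mul (hd j)) _).trans (Finset.sum_congr rfl fun j _ => ?_)
      exact (pd_mul (hc j) (hd j) _).trans (by rw [pd_coord]; rfl)
    rw [e1, Finset.sum_add_distrib, mul_add, add_comm]
    congr 1
    · have : ∑ j, T x (cn j (i ∘ l.succAbove)) * (ee (i l) : Sp n) j
          = T x (cn (i l) (i ∘ l.succAbove)) := by
        simp [ee]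
      rw [this, h.front, ← mul_assoc, ← mul_pow]
      simp
    · rw [Finset.mul_sum]
      exact Finset.sum_congr rfl fun j _ => by ring
  have e2 : ∑ j, x j * (pdT (ee j) T x i - extDer n (p + 1) T x (cn j i))
      = ∑ j, x j * extDer n p (ins j T) x i :=
    Finset.sum_congr rfl fun j _ => by rw [ext_cons]; ring
  rw [e2]
  simp only [extDer]
  rw [Finset.sum_congr rfl fun l _ => e l, Finset.sum_add_distrib, Finset.sum_comm]
  simp [Finset.mul_sum]

end tensor

/-! ### The Poincaré lemmas -/

section poincare
variable {n p : ℕ} {U : Set (Sp n)}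

/-- The classical Poincaré lemma on a set star-shaped about the origin: the potential is
`ι_X ∫₀¹ t ^ p • F (t • x) dt` for the Euler field `X`. -/
lemma poincare_anti (hU : IsOpen U) (hstar : ∀ x ∈ U, ∀ t ∈ Icc (0 : ℝ) 1, t • x ∈ U)
    {F : Sp n → (Fin (p + 1) → Fin n) → ℝ} (hF : SmT F U) (hA : ∀ x ∈ U, Anti (F x))
    (hd : ∀ x ∈ U, ∀ j, extDer n (p + 1) F x j = 0) :
    ∃ A : Sp n → (Fin p → Fin n) → ℝ, SmT A U ∧ (∀ x ∈ U, Anti (A x)) ∧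
      ∀ x ∈ U, ∀ i, extDer n p A x i = F x i := by
  set B : Sp n → (Fin (p + 1) → Fin n) → ℝ := fun x i => ray p (fun y => F y i) x with hB
  have hBs : SmT B U := fun i => ray_smooth hU hstar p (hF i)
  have hBa : ∀ x ∈ U, Anti (B x) := by
    intro x hx i σ
    simp only [hB, ray]
    rw [← intervalIntegral.integral_const_mul]
    refine intervalIntegral.integral_congr fun t ht => ?_
    rw [uIcc_of_le zero_le_one] at ht
    simp only [hA _ (hstar x hx t ht) i σ, smul_eq_mul]
    ring
  have hBd : ∀ x ∈ U, ∀ j, extDer n (p + 1) B x j = 0 := by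
    intro x hx j
    have e : ∀ l : Fin (p + 2), (-1 : ℝ) ^ (l : ℕ) *
        pd (fun y => B y (j ∘ l.succAbove)) (ee (j l)) x
        = ∫ t in (0 : ℝ)..1, (-1 : ℝ) ^ (l : ℕ) * (t ^ (p + 1) •
          pd (fun y => F y (j ∘ l.succAbove)) (ee (j l)) (t • x)) := by
      intro l
      rw [intervalIntegral.integral_const_mul]
      exact congrArg _ (pd_ray hU hstar p (hF _) hx _)
    simp only [extDer]
    rw [Finset.sum_congr rfl fun l _ => e l, ← intervalIntegral.integral_finsetSum]
    · rw [intervalIntegral.integral_congr (g := fun _ => 0), intervalIntegral.integral_zero]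
      intro t ht
      rw [uIcc_of_le zero_le_one] at ht
      have := hd _ (hstar x hx t ht) j
      simp only [extDer] at this
      calc _ = t ^ (p + 1) * ∑ l : Fin (p + 2), (-1 : ℝ) ^ (l : ℕ) *
            pd (fun y => F y (j ∘ l.succAbove)) (ee (j l)) (t • x) := by
            rw [Finset.mul_sum]
            exact Finset.sum_congr rfl fun l _ => by rw [smul_eq_mul]; ring
        _ = 0 := by rw [this, mul_zero]
    · intro l _
      refine (ContinuousOn.intervalIntegrable ?_).const_mul _
      rw [uIcc_of_le zero_le_one]
      exact ray_cont hstar (p + 1) (pd_smooth hU (hF _) _) hx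
  refine ⟨contr B, hBs.contr, fun x hx => anti_contr (hBa x hx), fun x hx i => ?_⟩
  rw [ext_contr hU hBs (hBa x hx) hx, ← ray_euler hU hstar p (hF i) hx, add_comm]
  simp only [hBd x hx, sub_zero]
  rfl

/-- An antisymmetric field on a star-shaped set is the componentwise Laplacian of an
antisymmetric field: antisymmetrize any componentwise solution. -/
lemma poisson_anti (hn : 0 < n) (hU : IsOpen U)
    (hstar : ∀ x ∈ U, ∀ t ∈ Icc (0 : ℝ) 1, t • x ∈ U)
    {T : Sp n → (Fin p → Fin n) → ℝ} (hT : SmT T U) (hA : ∀ x ∈ U, Anti (T x)) :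
    ∃ H : Sp n → (Fin p → Fin n) → ℝ, SmT H U ∧ (∀ x ∈ U, Anti (H x)) ∧
      ∀ x ∈ U, ∀ i, lap (fun y => H y i) x = T x i := by
  choose u hu hlap using fun i => poisson_star hn hU hstar (hT i)
  refine ⟨fun x => asym fun i => u i x, fun i => ?_, fun x _ => anti_asym _, fun x hx i => ?_⟩
  · exact ContDiffOn.sum fun σ _ => contDiffOn_const.mul (hu _)
  · rw [← asym_of_anti (hA x hx) i]
    refine (lap_sum _ hU (fun σ _ => contDiffOn_const.mul (hu _)) hx).trans ?_
    exact Finset.sum_congr rfl fun σ _ => by rw [lap_const_mul _ hU (hu _) hx, hlap _ x hx]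

/-- The strong Poincaré lemma on a set star-shaped about the origin. If `F = dA₀` and `ΔH = A₀`
then `A = δdH` is divergence-free, and `dA = d(ΔH - dδH) = dA₀ = F`. -/
lemma strong_poincare_zero (hn : 0 < n) (hU : IsOpen U)
    (hstar : ∀ x ∈ U, ∀ t ∈ Icc (0 : ℝ) 1, t • x ∈ U)
    {F : Sp n → (Fin (p + 1) → Fin n) → ℝ} (hF : SmT F U) (hA : ∀ x ∈ U, Anti (F x))
    (hd : ∀ x ∈ U, ∀ j, extDer n (p + 1) F x j = 0) :
    ∃ A : Sp n → (Fin p → Fin n) → ℝ, SmT A U ∧ (∀ x ∈ U, Anti (A x)) ∧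
      (∀ x ∈ U, ∀ i, F x i = extDer n p A x i) ∧ DivFreeOn n U p A := by
  obtain ⟨A₀, hs₀, ha₀, hd₀⟩ := poincare_anti hU hstar hF hA hd
  obtain ⟨H, hHs, hHa, hHl⟩ := poisson_anti hn hU hstar hs₀ ha₀
  have hdHs := hHs.ext hU
  have hdHa : ∀ x ∈ U, Anti (extDer n p H x) := fun x hx => anti_ext hU hHs hHa hx
  refine ⟨divg n p (extDer n p H), hdHs.divg hU, fun x hx => anti_divg hU hdHs hdHa hx,
    fun x hx i => ?_, ?_⟩
  · rw [← hd₀ x hx]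
    cases p with
    | zero => exact ext_congr hU (fun y hy j => by rw [weitzenbock_zero, hHl y hy]) hx i
    | succ p =>
      have hs := hHs.divg hU
      rw [ext_congr hU (S := divg n (p + 1) (extDer n (p + 1) H))
        (T := fun y j => A₀ y j - extDer n p (divg n p H) y j)
        (fun y hy j => by rw [weitzenbock hU hHs hy, hHl y hy]) hx i,
        ext_sub hU hs₀ (hs.ext hU) hx, ext_ext hU hs hx, sub_zero]
  · cases p with
    | zero => trivial
    | succ p => exact fun x hx i => divg_divg hU hdHs hdHa hx i

lemma pd_shift (f : Sp n → ℝ) (c v x : Sp n) : pd (fun y => f (y + c)) v x = pd f v (x + c) := by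
  simp only [pd, fderiv_comp_add_right]

lemma ext_shift (T : Sp n → (Fin p → Fin n) → ℝ) (c x : Sp n) (i : Fin (p + 1) → Fin n) :
    extDer n p (fun y => T (y + c)) x i = extDer n p T (x + c) i :=
  Finset.sum_congr rfl fun l _ => congrArg _ (pd_shift (fun y => T y (i ∘ l.succAbove)) c _ x)

end poincare

/-- **Strong Poincaré lemma** (here `k = m + 1` with `1 ≤ k ≤ n`). On an open star-shaped
subset `U` of `ℝⁿ`, every smooth closed antisymmetric `k`-tensor field has a smooth
divergence-free potential: `F = dA` with `δA = 0`. -/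
theorem strong_poincare_lemma (n m : ℕ) (hk : m + 1 ≤ n)
    (U : Set (EuclideanSpace ℝ (Fin n))) (hU : IsOpen U)
    (c : EuclideanSpace ℝ (Fin n)) (hc : c ∈ U) (hstar : StarConvex ℝ c U)
    (F : EuclideanSpace ℝ (Fin n) → (Fin (m + 1) → Fin n) → ℝ)
    (hF : ContDiffOn ℝ (⊤ : ℕ∞) F U)
    (hanti : IsAntisymmOn n (m + 1) U F)
    (hclosed : ∀ x ∈ U, ∀ j : Fin (m + 2) → Fin n, extDer n (m + 1) F x j = 0) :
    ∃ A : EuclideanSpace ℝ (Fin n) → (Fin m → Fin n) → ℝ, ContDiffOn ℝ (⊤ : ℕ∞) A U ∧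
      IsAntisymmOn n m U A ∧
      (∀ x ∈ U, ∀ i : Fin (m + 1) → Fin n, F x i = extDer n m A x i) ∧
      DivFreeOn n U m A := by
  -- Translate the centre `c` to the origin.
  set W : Set (Sp n) := (fun x => x + c) ⁻¹' U with hWdef
  have hW : IsOpen W := hU.preimage (by fun_prop)
  have hWs : ∀ x ∈ W, ∀ t ∈ Icc (0 : ℝ) 1, t • x ∈ W := by
    intro x hx t ht
    have := hstar hx (sub_nonneg.2 ht.2) ht.1 (sub_add_cancel 1 t)
    change t • x + c ∈ U
    convert this using 1
    module
  have hsh : ContDiff ℝ (⊤ : ℕ∞) fun x : Sp n => x + c := by fun_prop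
  obtain ⟨A, hAs, hAa, hAd, hAf⟩ := strong_poincare_zero (p := m) (by omega) hW hWs
    (F := fun x => F (x + c))
    (fun i => (contDiffOn_pi.1 hF i).comp hsh.contDiffOn fun x hx => hx)
    (fun x hx => hanti _ hx) (fun x hx j => (ext_shift F c x j).trans (hclosed _ hx j))
  have hm : ∀ x ∈ U, x + -c ∈ W := fun x hx => by
    change x + -c + c ∈ U
    rwa [neg_add_cancel_right]
  have hsh' : ContDiff ℝ (⊤ : ℕ∞) fun x : Sp n => x + -c := by fun_prop
  refine ⟨fun x => A (x + -c), contDiffOn_pi.2 fun i => (hAs i).comp hsh'.contDiffOn hm,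
    fun x hx => hAa _ (hm x hx), fun x hx i => ?_, ?_⟩
  · rw [ext_shift, ← hAd _ (hm x hx), neg_add_cancel_right]
  · cases m with
    | zero => trivial
    | succ m =>
      intro x hx i
      refine Eq.trans ?_ (hAf _ (hm x hx) i)
      exact Finset.sum_congr rfl fun j _ => pd_shift (fun y => A y (Fin.cons j i)) (-c) _ x
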